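/- Let H ⊂ ℝⁿ be a Hanner polytope. Among all initial positions consisting of a coordinate q₁ ∈ ∂H and a momentum p₁ ∈ ∂H° such that the vector −n_H(q₁) placed at p₁ points into the interior of H°, all but a negligible (lower-dimensional) set generate, by the billiard rules, a closed simple classical billiard trajectory of length 4 in the configuration H × H°. -/

import Mathlib

open MeasureTheory
open scoped Pointwise

namespace Billiard

/-- The canonical pairing `⟨p, q⟩ = ∑ i, p i * q i` on `ℝⁿ`. -/
noncomputable def pairing {n : ℕ} (p q : Fin n → ℝ) : ℝ := ∑ i, p i * q i

/-- The polar set `H° = {p : ⟨p, q⟩ ≤ 1 for all q ∈ H}`. -/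
def polarSet {n : ℕ} (H : Set (Fin n → ℝ)) : Set (Fin n → ℝ) :=
  {p | ∀ q ∈ H, pairing p q ≤ 1}

/-- The support function of `T`, i.e. the norm `‖v‖_{T} = max_{p ∈ T} ⟨p, v⟩`. -/
noncomputable def suppFn {n : ℕ} (T : Set (Fin n → ℝ)) (v : Fin n → ℝ) : ℝ :=
  sSup ((fun p => pairing p v) '' T)

/-- Projection of `ℝ^{k+l}` onto the first `k` coordinates. -/
def splitL {k l : ℕ} (x : Fin (k + l) → ℝ) : Fin k → ℝ := fun i => x (Fin.castAdd l i)

/-- Projection of `ℝ^{k+l}` onto the last `l` coordinates. -/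
def splitR {k l : ℕ} (x : Fin (k + l) → ℝ) : Fin l → ℝ := fun j => x (Fin.natAdd k j)

/-- `K ⊕_∞ L = K × L ⊂ ℝ^{k+l}`. -/
def sumInfty {k l : ℕ} (K : Set (Fin k → ℝ)) (L : Set (Fin l → ℝ)) :
    Set (Fin (k + l) → ℝ) :=
  {x | splitL x ∈ K ∧ splitR x ∈ L}

/-- `K ⊕₁ L = conv((K × {0}) ∪ ({0} × L)) ⊂ ℝ^{k+l}`. -/
def sumOne {k l : ℕ} (K : Set (Fin k → ℝ)) (L : Set (Fin l → ℝ)) :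
    Set (Fin (k + l) → ℝ) :=
  convexHull ℝ ({x | splitL x ∈ K ∧ splitR x = 0} ∪ {x | splitL x = 0 ∧ splitR x ∈ L})

/-- Hanner polytopes, defined inductively: the segment `[-1,1] ⊂ ℝ` is a Hanner polytope,
and `K ⊕_∞ L`, `K ⊕₁ L` are Hanner polytopes whenever `K`, `L` are. -/
inductive IsHanner : ∀ n : ℕ, Set (Fin n → ℝ) → Prop
  | segment : IsHanner 1 {x | |x 0| ≤ 1}
  | inftySum {k l : ℕ} {K : Set (Fin k → ℝ)} {L : Set (Fin l → ℝ)} :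
      IsHanner k K → IsHanner l L → IsHanner (k + l) (sumInfty K L)
  | oneSum {k l : ℕ} {K : Set (Fin k → ℝ)} {L : Set (Fin l → ℝ)} :
      IsHanner k K → IsHanner l L → IsHanner (k + l) (sumOne K L)

/-- `u` is the outer normal of the facet of `H` containing `q`, normalized to lie in `∂H°`:
`u ∈ H°`, `⟨u, q⟩ = 1`, and `u` is the unique such vector. The uniqueness encodes that `q`
lies in the relative interior of a facet of the polytope `H`. -/
def IsUniqueNormal {n : ℕ} (H : Set (Fin n → ℝ)) (q u : Fin n → ℝ) : Prop :=
  u ∈ polarSet H ∧ pairing u q = 1 ∧ ∀ v ∈ polarSet H, pairing v q = 1 → v = u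

/-- A classical closed billiard trajectory in the configuration `H × T` (with `T = H°`):
closed `m`-periodic sequences of coordinates `q i ∈ ∂H` and momenta `p i ∈ ∂T`, each in
the relative interior of a facet (encoded by uniqueness of the normalized outer normal),
satisfying the reflection rule `p (i+1) − p i = −λ i • n_H(q i)` with `λ i > 0` and the
motion rule `q (i+1) − q i = μ i • n_T(p (i+1))` with `μ i > 0`. -/
structure ClassicalTraj (n : ℕ) (H T : Set (Fin n → ℝ)) where
  m : ℕ
  m_pos : 0 < m
  q : ℕ → Fin n → ℝ
  p : ℕ → Fin n → ℝ
  nq : ℕ → Fin n → ℝ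
  np : ℕ → Fin n → ℝ
  lam : ℕ → ℝ
  mu : ℕ → ℝ
  q_mem : ∀ i, q i ∈ frontier H
  p_mem : ∀ i, p i ∈ frontier T
  q_periodic : ∀ i, q (i + m) = q i
  p_periodic : ∀ i, p (i + m) = p i
  nq_spec : ∀ i, IsUniqueNormal H (q i) (nq i)
  np_spec : ∀ i, IsUniqueNormal T (p i) (np i)
  lam_pos : ∀ i, 0 < lam i
  mu_pos : ∀ i, 0 < mu i
  reflection : ∀ i, p (i + 1) - p i = (-(lam i)) • nq i
  motion : ∀ i, q (i + 1) - q i = mu i • np (i + 1)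

/-- A trajectory is simple if it does not traverse the same closed route more than once,
i.e. it has no period smaller than `m`. -/
def ClassicalTraj.IsSimple {n : ℕ} {H T : Set (Fin n → ℝ)}
    (τ : ClassicalTraj n H T) : Prop :=
  ∀ d : ℕ, 0 < d → d < τ.m → ¬(∀ i, τ.q (i + d) = τ.q i ∧ τ.p (i + d) = τ.p i)

/-- The length of the trajectory, measured in the norm `‖·‖_T` with `T = H°`. -/
noncomputable def ClassicalTraj.length {n : ℕ} {H T : Set (Fin n → ℝ)}
    (τ : ClassicalTraj n H T) : ℝ :=
  ∑ i ∈ Finset.range τ.m, suppFn T (τ.q (i + 1) - τ.q i)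

/-- The trace of a trajectory in phase space `∂H × ∂T`: the union of the segments swept by
the coordinate while the momentum is constant, and by the momentum while the coordinate is
constant. -/
noncomputable def ClassicalTraj.trace {n : ℕ} {H T : Set (Fin n → ℝ)}
    (τ : ClassicalTraj n H T) : Set ((Fin n → ℝ) × (Fin n → ℝ)) :=
  ⋃ i ∈ Finset.range τ.m,
    ((fun x => (x, τ.p (i + 1))) '' segment ℝ (τ.q i) (τ.q (i + 1)) ∪
      (fun y => (τ.q i, y)) '' segment ℝ (τ.p i) (τ.p (i + 1)))

/-- The coordinate polygonal line of a trajectory, as a subset of `∂H`. -/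
noncomputable def ClassicalTraj.coordTrace {n : ℕ} {H T : Set (Fin n → ℝ)}
    (τ : ClassicalTraj n H T) : Set (Fin n → ℝ) :=
  ⋃ i ∈ Finset.range τ.m, segment ℝ (τ.q i) (τ.q (i + 1))

/-- The momentum polygonal line of a trajectory, as a subset of `∂T`. -/
noncomputable def ClassicalTraj.momTrace {n : ℕ} {H T : Set (Fin n → ℝ)}
    (τ : ClassicalTraj n H T) : Set (Fin n → ℝ) :=
  ⋃ i ∈ Finset.range τ.m, segment ℝ (τ.p i) (τ.p (i + 1))

end Billiard

namespace Billiard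

section Pairing

variable {n k l : ℕ}

theorem pairing_comm (p q : Fin n → ℝ) : pairing p q = pairing q p :=
  Finset.sum_congr rfl fun _ _ => mul_comm _ _

@[simp]
theorem pairing_add_right (p q r : Fin n → ℝ) : pairing p (q + r) = pairing p q + pairing p r := by
  simp [pairing, mul_add, Finset.sum_add_distrib]

@[simp]
theorem pairing_smul_right (c : ℝ) (p q : Fin n → ℝ) : pairing p (c • q) = c * pairing p q := by
  simp only [pairing, Finset.mul_sum, Pi.smul_apply, smul_eq_mul]
  exact Finset.sum_congr rfl fun _ _ => by ring

@[simp]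
theorem pairing_neg_right (p q : Fin n → ℝ) : pairing p (-q) = -pairing p q := by
  simp [pairing]

@[simp]
theorem pairing_sub_right (p q r : Fin n → ℝ) : pairing p (q - r) = pairing p q - pairing p r := by
  simp [pairing, mul_sub, Finset.sum_sub_distrib]

@[simp]
theorem pairing_zero_right (p : Fin n → ℝ) : pairing p 0 = 0 := by simp [pairing]

@[simp]
theorem pairing_zero_left (p : Fin n → ℝ) : pairing 0 p = 0 := by simp [pairing]

@[simp]
theorem pairing_neg_left (p q : Fin n → ℝ) : pairing (-p) q = -pairing p q := by
  simp [pairing]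

theorem eq_zero_of_pairing_self {x : Fin n → ℝ} (h : pairing x x = 0) : x = 0 := by
  funext i
  have := (Finset.sum_eq_zero_iff_of_nonneg (fun i _ => mul_self_nonneg (x i))).1 h i
    (Finset.mem_univ i)
  simpa using this

@[fun_prop]
theorem continuous_pairing (p : Fin n → ℝ) : Continuous (pairing p) := by
  unfold pairing; fun_prop

theorem splitL_append (a : Fin k → ℝ) (b : Fin l → ℝ) : splitL (Fin.append a b) = a := by
  funext i; simp [splitL]

theorem splitR_append (a : Fin k → ℝ) (b : Fin l → ℝ) : splitR (Fin.append a b) = b := by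
  funext i; simp [splitR]

theorem append_split (x : Fin (k + l) → ℝ) : Fin.append (splitL x) (splitR x) = x := by
  funext i
  refine Fin.addCases (fun i => ?_) (fun i => ?_) i <;> simp [splitL, splitR]

theorem ext_split {x y : Fin (k + l) → ℝ} (hl : splitL x = splitL y) (hr : splitR x = splitR y) :
    x = y := by
  rw [← append_split x, ← append_split y, hl, hr]

@[simp]
theorem pairing_append_left (a : Fin k → ℝ) (b : Fin l → ℝ) (x : Fin (k + l) → ℝ) :
    pairing (Fin.append a b) x = pairing a (splitL x) + pairing b (splitR x) := by
  simp [pairing, Fin.sum_univ_add, splitL, splitR]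

theorem pairing_eq_split (x y : Fin (k + l) → ℝ) :
    pairing x y = pairing (splitL x) (splitL y) + pairing (splitR x) (splitR y) := by
  rw [← pairing_append_left, append_split]

theorem append_inj {a a' : Fin k → ℝ} {b b' : Fin l → ℝ}
    (h : Fin.append a b = Fin.append a' b') : a = a' ∧ b = b' :=
  ⟨by simpa [splitL_append] using congrArg splitL h,
    by simpa [splitR_append] using congrArg splitR h⟩

theorem append_neg (a : Fin k → ℝ) (b : Fin l → ℝ) :
    Fin.append (-a) (-b) = -Fin.append a b := by
  apply ext_split
  · rw [splitL_append]; funext i; simp [splitL]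
  · rw [splitR_append]; funext i; simp [splitR]

end Pairing

/-- The polyhedron cut out by the inequalities `⟨u, x⟩ ≤ 1`, `u ∈ A`. -/
def body {n : ℕ} (A : Set (Fin n → ℝ)) : Set (Fin n → ℝ) := {x | ∀ u ∈ A, pairing u x ≤ 1}

/-- Facet normals of a product, given those of its factors. -/
def prodNormals {k l : ℕ} (A : Set (Fin k → ℝ)) (A' : Set (Fin l → ℝ)) :
    Set (Fin (k + l) → ℝ) :=
  (fun a => Fin.append a 0) '' A ∪ (fun a => Fin.append 0 a) '' A'

/-- Vertices of a product, given those of its factors. -/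
def prodVertices {k l : ℕ} (B : Set (Fin k → ℝ)) (B' : Set (Fin l → ℝ)) :
    Set (Fin (k + l) → ℝ) :=
  Set.image2 Fin.append B B'

/-- Pairs `(A, B)` where `A` is the set of facet normals and `B` the set of vertices of a
Hanner polytope. -/
inductive HannerPair : ∀ n : ℕ, Set (Fin n → ℝ) → Set (Fin n → ℝ) → Prop
  | seg : HannerPair 1 {1, -1} {1, -1}
  | prod {k l : ℕ} {A B : Set (Fin k → ℝ)} {A' B' : Set (Fin l → ℝ)} :
      HannerPair k A B → HannerPair l A' B' →
        HannerPair (k + l) (prodNormals A A') (prodVertices B B')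
  | swap {n : ℕ} {A B : Set (Fin n → ℝ)} : HannerPair n A B → HannerPair n B A

/-- The basic finiteness, symmetry and duality properties of normals and vertices of a centrally
symmetric polytope. -/
structure DualPair {n : ℕ} (A B : Set (Fin n → ℝ)) : Prop where
  finA : A.Finite
  finB : B.Finite
  neA : A.Nonempty
  neB : B.Nonempty
  negA : ∀ u ∈ A, -u ∈ A
  negB : ∀ w ∈ B, -w ∈ B
  le : ∀ u ∈ A, ∀ w ∈ B, pairing u w ≤ 1
  exB : ∀ u ∈ A, ∃ w ∈ B, pairing u w = 1
  exA : ∀ w ∈ B, ∃ u ∈ A, pairing w u = 1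
  bdA : ∀ (q : Fin n → ℝ) (c : ℝ), (∀ u ∈ A, pairing u q ≤ c) → ∀ i, |q i| ≤ c
  bdB : ∀ (p : Fin n → ℝ) (c : ℝ), (∀ w ∈ B, pairing w p ≤ c) → ∀ i, |p i| ≤ c
  dual : ∀ (p q : Fin n → ℝ) (a c : ℝ), 0 ≤ a → 0 ≤ c → (∀ u ∈ A, pairing u q ≤ c) →
    (∀ w ∈ B, pairing w p ≤ a) → pairing p q ≤ a * c

namespace DualPair

variable {n : ℕ} {A B : Set (Fin n → ℝ)}

theorem swap (h : DualPair A B) : DualPair B A where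
  finA := h.finB
  finB := h.finA
  neA := h.neB
  neB := h.neA
  negA := h.negB
  negB := h.negA
  le u hu w hw := by rw [pairing_comm]; exact h.le w hw u hu
  exB := h.exA
  exA := h.exB
  bdA := h.bdB
  bdB := h.bdA
  dual p q a c ha hc hq hp := by
    rw [pairing_comm, mul_comm]; exact h.dual q p c a hc ha hp hq

theorem ne_zero (h : DualPair A B) {u : Fin n → ℝ} (hu : u ∈ A) : u ≠ 0 := by
  rintro rfl
  obtain ⟨w, -, hw⟩ := h.exB 0 hu
  simp at hw

/-- The maximum of `⟨u, q⟩` over the normals `u` is attained and nonnegative. -/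
theorem exists_max (h : DualPair A B) (q : Fin n → ℝ) :
    ∃ u ∈ A, 0 ≤ pairing u q ∧ ∀ v ∈ A, pairing v q ≤ pairing u q := by
  obtain ⟨u, hu, hmax⟩ := h.finA.exists_maximalFor (fun u => pairing u q) A h.neA
  have hm : ∀ v ∈ A, pairing v q ≤ pairing u q := fun v hv =>
    (le_total (pairing v q) (pairing u q)).elim id fun hle => hmax hv hle
  refine ⟨u, hu, ?_, hm⟩
  have := hm (-u) (h.negA u hu)
  rw [pairing_neg_left] at this
  linarith

theorem prod {k l : ℕ} {A B : Set (Fin k → ℝ)} {A' B' : Set (Fin l → ℝ)}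
    (h : DualPair A B) (h' : DualPair A' B') :
    DualPair (prodNormals A A') (prodVertices B B') where
  finA := (h.finA.image _).union (h'.finA.image _)
  finB := h.finB.image2 _ h'.finB
  neA := (h.neA.image _).inl
  neB := h.neB.image2 h'.neB
  negA := by
    rintro _ (⟨u, hu, rfl⟩ | ⟨u, hu, rfl⟩)
    · exact Or.inl ⟨-u, h.negA u hu, by simpa using append_neg u (0 : Fin l → ℝ)⟩
    · exact Or.inr ⟨-u, h'.negA u hu, by simpa using append_neg (0 : Fin k → ℝ) u⟩
  negB := by
    rintro _ ⟨u, hu, v, hv, rfl⟩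
    exact ⟨-u, h.negB u hu, -v, h'.negB v hv, append_neg u v⟩
  le := by
    rintro _ (⟨u, hu, rfl⟩ | ⟨u, hu, rfl⟩) _ ⟨w, hw, w', hw', rfl⟩
    · simpa [splitL_append] using h.le u hu w hw
    · simpa [splitR_append] using h'.le u hu w' hw'
  exB := by
    rintro _ (⟨u, hu, rfl⟩ | ⟨u, hu, rfl⟩)
    · obtain ⟨w, hw, e⟩ := h.exB u hu
      obtain ⟨w', hw'⟩ := h'.neB
      exact ⟨_, ⟨w, hw, w', hw', rfl⟩, by simpa [splitL_append] using e⟩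
    · obtain ⟨w, hw, e⟩ := h'.exB u hu
      obtain ⟨w', hw'⟩ := h.neB
      exact ⟨_, ⟨w', hw', w, hw, rfl⟩, by simpa [splitR_append] using e⟩
  exA := by
    rintro _ ⟨w, hw, w', hw', rfl⟩
    obtain ⟨u, hu, e⟩ := h.exA w hw
    exact ⟨_, Or.inl ⟨u, hu, rfl⟩, by simpa [splitL_append, splitR_append] using e⟩
  bdA := by
    intro q c hq i
    have hl := h.bdA (splitL q) c fun u hu => by
      simpa using hq _ (Or.inl ⟨u, hu, rfl⟩)
    have hr := h'.bdA (splitR q) c fun u hu => by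
      simpa using hq _ (Or.inr ⟨u, hu, rfl⟩)
    exact Fin.addCases (motive := fun i => |q i| ≤ c) hl hr i
  bdB := by
    intro p c hp i
    obtain ⟨w, hw, hw0, -⟩ := h.swap.exists_max (splitL p)
    obtain ⟨w', hw', hw0', -⟩ := h'.swap.exists_max (splitR p)
    have hl := h.bdB (splitL p) c fun v hv => by
      have := hp _ ⟨v, hv, w', hw', rfl⟩
      rw [pairing_append_left] at this
      linarith
    have hr := h'.bdB (splitR p) c fun v hv => by
      have := hp _ ⟨w, hw, v, hv, rfl⟩
      rw [pairing_append_left] at this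
      linarith
    exact Fin.addCases (motive := fun i => |p i| ≤ c) hl hr i
  dual := by
    intro p q a c ha hc hq hp
    obtain ⟨w, hw, hw0, hwm⟩ := h.swap.exists_max (splitL p)
    obtain ⟨w', hw', hw0', hwm'⟩ := h'.swap.exists_max (splitR p)
    have h1 := h.dual _ (splitL q) _ c hw0 hc
      (fun u hu => by simpa using hq _ (Or.inl ⟨u, hu, rfl⟩)) hwm
    have h2 := h'.dual _ (splitR q) _ c hw0' hc
      (fun u hu => by simpa using hq _ (Or.inr ⟨u, hu, rfl⟩)) hwm'
    have h3 := hp _ ⟨w, hw, w', hw', rfl⟩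
    rw [pairing_append_left] at h3
    rw [pairing_eq_split]
    nlinarith

theorem seg : DualPair ({1, -1} : Set (Fin 1 → ℝ)) {1, -1} where
  finA := by simp
  finB := by simp
  neA := by simp
  neB := by simp
  negA := by rintro u (rfl | rfl) <;> simp
  negB := by rintro u (rfl | rfl) <;> simp
  le := by rintro u (rfl | rfl) w (rfl | rfl) <;> norm_num [pairing]
  exB u hu := ⟨u, hu, by rcases hu with rfl | rfl <;> norm_num [pairing]⟩
  exA u hu := ⟨u, hu, by rcases hu with rfl | rfl <;> norm_num [pairing]⟩
  bdA := by
    intro q c hq i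
    have h1 := hq 1 (by simp)
    have h2 := hq (-1) (by simp)
    simp only [pairing, Finset.univ_unique, Finset.sum_singleton, Pi.one_apply, Pi.neg_apply,
      one_mul, neg_mul] at h1 h2
    rw [Subsingleton.elim i default, abs_le]
    constructor <;> linarith
  bdB := by
    intro q c hq i
    have h1 := hq 1 (by simp)
    have h2 := hq (-1) (by simp)
    simp only [pairing, Finset.univ_unique, Finset.sum_singleton, Pi.one_apply, Pi.neg_apply,
      one_mul, neg_mul] at h1 h2
    rw [Subsingleton.elim i default, abs_le]
    constructor <;> linarith
  dual := by
    intro p q a c ha hc hq hp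
    have h1 := hq 1 (by simp)
    have h2 := hq (-1) (by simp)
    have h3 := hp 1 (by simp)
    have h4 := hp (-1) (by simp)
    simp only [pairing, Finset.univ_unique, Finset.sum_singleton, Pi.one_apply, Pi.neg_apply,
      one_mul, neg_mul] at h1 h2 h3 h4 ⊢
    calc p default * q default ≤ |p default * q default| := le_abs_self _
      _ = |p default| * |q default| := abs_mul _ _
      _ ≤ a * c := mul_le_mul (abs_le.2 ⟨by linarith, h3⟩) (abs_le.2 ⟨by linarith, h1⟩)
          (abs_nonneg _) ha

theorem polarSet_body (h : DualPair A B) : polarSet (body A) = body B := by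
  ext p
  constructor
  · intro hp w hw
    rw [pairing_comm]
    exact hp w fun u hu => h.le u hu w hw
  · intro hp q hq
    simpa using h.dual p q 1 1 zero_le_one zero_le_one hq hp

theorem neg_mem_body (h : DualPair A B) {x : Fin n → ℝ} (hx : x ∈ body A) : -x ∈ body A := by
  intro u hu
  have := hx (-u) (h.negA u hu)
  rwa [pairing_neg_left, ← pairing_neg_right] at this

theorem neg_one_le (h : DualPair A B) {x u : Fin n → ℝ} (hx : x ∈ body A) (hu : u ∈ A) :
    -1 ≤ pairing u x := by
  have := hx (-u) (h.negA u hu)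
  rw [pairing_neg_left] at this
  linarith

end DualPair

theorem HannerPair.dualPair {n : ℕ} {A B : Set (Fin n → ℝ)} (h : HannerPair n A B) :
    DualPair A B := by
  induction h with
  | seg => exact DualPair.seg
  | prod _ _ h h' => exact h.prod h'
  | swap _ h => exact h.swap

theorem body_prodNormals {k l : ℕ} (A : Set (Fin k → ℝ)) (A' : Set (Fin l → ℝ)) :
    body (prodNormals A A') = sumInfty (body A) (body A') := by
  ext x
  constructor
  · intro hx
    exact ⟨fun u hu => by simpa using hx _ (Or.inl ⟨u, hu, rfl⟩),
      fun u hu => by simpa using hx _ (Or.inr ⟨u, hu, rfl⟩)⟩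
  · rintro ⟨h1, h2⟩ _ (⟨u, hu, rfl⟩ | ⟨u, hu, rfl⟩)
    · simpa using h1 u hu
    · simpa using h2 u hu

theorem convex_body {n : ℕ} (A : Set (Fin n → ℝ)) : Convex ℝ (body A) := by
  intro x hx y hy a b ha hb hab u hu
  have h1 := hx u hu
  have h2 := hy u hu
  simp only [pairing_add_right, pairing_smul_right]
  nlinarith

theorem exists_eq_smul_body {n : ℕ} {A B : Set (Fin n → ℝ)} (h : DualPair A B) {x : Fin n → ℝ}
    {c : ℝ} (hc : 0 ≤ c) (hx : ∀ u ∈ A, pairing u x ≤ c) : ∃ y ∈ body A, x = c • y := by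
  rcases hc.eq_or_lt with rfl | hc
  · refine ⟨0, fun u _ => by simp, ?_⟩
    funext i
    simpa using h.bdA x 0 hx i
  · refine ⟨c⁻¹ • x, fun u hu => ?_, (smul_inv_smul₀ hc.ne' x).symm⟩
    rw [pairing_smul_right, inv_mul_le_iff₀ hc, mul_one]
    exact hx u hu

theorem body_prodVertices {k l : ℕ} {A B : Set (Fin k → ℝ)} {A' B' : Set (Fin l → ℝ)}
    (h : DualPair A B) (h' : DualPair A' B') :
    body (prodVertices A A') = sumOne (body A) (body A') := by
  apply Set.Subset.antisymm
  · intro x hx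
    obtain ⟨u, hu, hu0, hum⟩ := h.exists_max (splitL x)
    obtain ⟨u', hu', hu0', hum'⟩ := h'.exists_max (splitR x)
    have hle := hx _ ⟨u, hu, u', hu', rfl⟩
    rw [pairing_append_left] at hle
    obtain ⟨y, hy, ey⟩ := exists_eq_smul_body h hu0 hum
    obtain ⟨z, hz, ez⟩ := exists_eq_smul_body (c := 1 - pairing u (splitL x)) h' (by linarith)
      fun v hv => (hum' v hv).trans (by linarith)
    have e : x = pairing u (splitL x) • Fin.append y 0 +
        (1 - pairing u (splitL x)) • Fin.append 0 z := by
      apply ext_split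
      · conv_lhs => rw [ey]
        funext i
        simp [splitL]
      · conv_lhs => rw [ez]
        funext i
        simp [splitR]
    rw [e]
    have hcvx : Convex ℝ (sumOne (body A) (body A')) := convex_convexHull ℝ _
    refine hcvx (x := Fin.append y 0) ?_ (y := Fin.append 0 z) ?_ hu0 (by linarith) (by ring)
    · exact subset_convexHull ℝ _ (Or.inl ⟨by rwa [splitL_append], splitR_append _ _⟩)
    · exact subset_convexHull ℝ _ (Or.inr ⟨splitL_append _ _, by rwa [splitR_append]⟩)
  · refine convexHull_min ?_ (convex_body _)
    rintro x (⟨hx, hx'⟩ | ⟨hx, hx'⟩) _ ⟨u, hu, u', hu', rfl⟩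
    · simpa [hx'] using hx u hu
    · simpa [hx] using hx' u' hu'

theorem IsHanner.exists_pair {n : ℕ} {H : Set (Fin n → ℝ)} (hH : IsHanner n H) :
    ∃ A B, HannerPair n A B ∧ H = body A := by
  induction hH with
  | segment =>
    refine ⟨_, _, HannerPair.seg, ?_⟩
    ext x
    simp [body, pairing, abs_le, and_comm, neg_le]
  | inftySum _ _ h h' =>
    obtain ⟨A, B, h, rfl⟩ := h
    obtain ⟨A', B', h', rfl⟩ := h'
    exact ⟨_, _, h.prod h', (body_prodNormals _ _).symm⟩
  | oneSum _ _ h h' =>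
    obtain ⟨A, B, h, rfl⟩ := h
    obtain ⟨A', B', h', rfl⟩ := h'
    exact ⟨_, _, (h.swap.prod h'.swap).swap, (body_prodVertices h.dualPair h'.dualPair).symm⟩


/-- A nonsingular point of the boundary of `body A × body B`: each of `q` and `p` lies on at most
one facet, and at least one of them lies on a facet. -/
structure IsState {n : ℕ} (A B : Set (Fin n → ℝ)) (q p : Fin n → ℝ) : Prop where
  memq : q ∈ body A
  memp : p ∈ body B
  uniq : ∀ u ∈ A, ∀ v ∈ A, pairing u q = 1 → pairing v q = 1 → u = v
  unip : ∀ u ∈ B, ∀ v ∈ B, pairing u p = 1 → pairing v p = 1 → u = v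
  bdry : (∃ u ∈ A, pairing u q = 1) ∨ ∃ w ∈ B, pairing w p = 1

/-- A move of the billiard flow, either of the momentum (by `σ`) or of the coordinate (by `τ`);
it need not be maximal. -/
def IsStep {n : ℕ} (A B : Set (Fin n → ℝ)) (q p q' p' : Fin n → ℝ) (τ σ : ℝ) : Prop :=
  (0 ≤ σ ∧ τ = 0 ∧ q' = q ∧ ∃ u ∈ A, pairing u q = 1 ∧ p' = p - σ • u) ∨
    (0 ≤ τ ∧ σ = 0 ∧ p' = p ∧ ∃ w ∈ B, pairing w p = 1 ∧ q' = q + τ • w)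

/-- A finite sequence of moves through nonsingular states. -/
structure IsPath {n : ℕ} (A B : Set (Fin n → ℝ)) (m : ℕ) (q p : ℕ → Fin n → ℝ) (τ σ : ℕ → ℝ) :
    Prop where
  state : ∀ i ≤ m, IsState A B (q i) (p i)
  step : ∀ i < m, IsStep A B (q i) (p i) (q (i + 1)) (p (i + 1)) (τ i) (σ i)

/-- The relation between the endpoints of a path, the time `t` spent moving the coordinate, and the
time `s` spent moving the momentum. It expresses that the flow is antiperiodic with antiperiod `2`
in both times, and geodesic during half a period. -/
structure FlowRel {n : ℕ} (A B : Set (Fin n → ℝ)) (q p q' p' : Fin n → ℝ) (t s : ℝ) : Prop where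
  s_le : t < 2 → s ≤ 2
  t_le : s < 2 → t ≤ 2
  q_neg : t = 2 → q' = -q
  q_bdry : t = 2 → s = 2 ∨ ∃ u ∈ A, pairing u q = 1
  p_neg : s = 2 → p' = -p
  p_bdry : s = 2 → t = 2 ∨ ∃ w ∈ B, pairing w p = 1
  q_geod : ∀ u ∈ A, pairing u q = 1 → t ≤ 2 → pairing u (q - q') = t
  p_geod : ∀ w ∈ B, pairing w p = 1 → s ≤ 2 → pairing w (p - p') = s

theorem IsStep.nonneg {n : ℕ} {A B : Set (Fin n → ℝ)} {q p q' p' : Fin n → ℝ} {τ σ : ℝ}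
    (h : IsStep A B q p q' p' τ σ) : 0 ≤ τ ∧ 0 ≤ σ := by
  rcases h with ⟨h0, e, -⟩ | ⟨h0, e, -⟩
  · exact ⟨e.ge, h0⟩
  · exact ⟨h0, e.ge⟩

theorem IsPath.t_nonneg {n : ℕ} {A B : Set (Fin n → ℝ)} {m : ℕ} {q p : ℕ → Fin n → ℝ}
    {τ σ : ℕ → ℝ} (h : IsPath A B m q p τ σ) : 0 ≤ ∑ i ∈ Finset.range m, τ i :=
  Finset.sum_nonneg fun i hi => (h.step i (Finset.mem_range.1 hi)).nonneg.1

theorem IsPath.s_nonneg {n : ℕ} {A B : Set (Fin n → ℝ)} {m : ℕ} {q p : ℕ → Fin n → ℝ}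
    {τ σ : ℕ → ℝ} (h : IsPath A B m q p τ σ) : 0 ≤ ∑ i ∈ Finset.range m, σ i :=
  Finset.sum_nonneg fun i hi => (h.step i (Finset.mem_range.1 hi)).nonneg.2

section Swap

variable {n : ℕ} {A B : Set (Fin n → ℝ)}

theorem exists_pairing_neg (hA : ∀ u ∈ A, -u ∈ A) {x : Fin n → ℝ}
    (h : ∃ u ∈ A, pairing u x = 1) : ∃ u ∈ A, pairing u (-x) = 1 := by
  obtain ⟨u, hu, e⟩ := h
  exact ⟨-u, hA u hu, by simpa using e⟩

theorem IsState.swap (h : DualPair A B) {q p : Fin n → ℝ} (hs : IsState A B q p) :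
    IsState B A p (-q) where
  memq := hs.memp
  memp := h.neg_mem_body hs.memq
  uniq := hs.unip
  unip u hu v hv e e' := neg_injective <| hs.uniq (-u) (h.negA u hu) (-v) (h.negA v hv)
    (by simpa using e) (by simpa using e')
  bdry := hs.bdry.symm.imp_right (exists_pairing_neg h.negA)

theorem IsStep.swap (h : DualPair A B) {q p q' p' : Fin n → ℝ} {τ σ : ℝ}
    (hs : IsStep A B q p q' p' τ σ) : IsStep B A p (-q) p' (-q') σ τ := by
  rcases hs with ⟨h0, e, eq, u, hu, e1, ep⟩ | ⟨h0, e, ep, w, hw, e1, eq⟩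
  · exact Or.inr ⟨h0, e, by rw [eq], -u, h.negA u hu, by simpa using e1, by
      rw [ep, smul_neg, sub_eq_add_neg]⟩
  · exact Or.inl ⟨h0, e, ep, w, hw, e1, by rw [eq, neg_add, sub_eq_add_neg]⟩

theorem IsPath.swap (h : DualPair A B) {m : ℕ} {q p : ℕ → Fin n → ℝ} {τ σ : ℕ → ℝ}
    (hs : IsPath A B m q p τ σ) : IsPath B A m p (fun i => -q i) σ τ where
  state i hi := (hs.state i hi).swap h
  step i hi := (hs.step i hi).swap h

theorem FlowRel.of_swap (h : DualPair A B) {q p q' p' : Fin n → ℝ} {t s : ℝ}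
    (hf : FlowRel B A p (-q) p' (-q') s t) : FlowRel A B q p q' p' t s where
  s_le := hf.t_le
  t_le := hf.s_le
  q_neg e := neg_injective (hf.p_neg e)
  q_bdry e := (hf.p_bdry e).imp_right fun h' => by simpa using exists_pairing_neg h.negA h'
  p_neg := hf.q_neg
  p_bdry e := (hf.q_bdry e).imp_right id
  q_geod u hu e ht := by
    have := hf.p_geod (-u) (h.negA u hu) (by simpa using e) ht
    simp only [pairing_sub_right, pairing_neg_left, pairing_neg_right, neg_neg] at this ⊢
    exact this
  p_geod w hw e hs := hf.q_geod w hw e hs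

end Swap

section Segment

/-- The lift of the boundary of the square `[-1,1]²` to a staircase in the plane of times `(T, S)`;
the sign `e` alternates with the step `k` of the staircase. -/
def OnStair (e k x y T S : ℝ) : Prop :=
  (2 * k ≤ T ∧ T ≤ 2 * k + 2 ∧ S = 2 * k ∧ x = e * (1 - (T - 2 * k)) ∧ y = -e) ∨
    (T = 2 * k + 2 ∧ 2 * k ≤ S ∧ S ≤ 2 * k + 2 ∧ x = -e ∧ y = -e * (1 - (S - 2 * k)))

/-- A move along the boundary of the square. -/
def SquareStep (x y x' y' τ σ : ℝ) : Prop :=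
  (0 ≤ σ ∧ τ = 0 ∧ x' = x ∧ (x = 1 ∨ x = -1) ∧ y' = y - σ * x) ∨
    (0 ≤ τ ∧ σ = 0 ∧ y' = y ∧ (y = 1 ∨ y = -1) ∧ x' = x + τ * y)

theorem exists_onStair {x y : ℝ} (hx : |x| ≤ 1) (hy : |y| ≤ 1)
    (hb : (x = 1 ∨ x = -1) ∨ (y = 1 ∨ y = -1)) :
    ∃ e T S : ℝ, (e = 1 ∨ e = -1) ∧ OnStair e 0 x y T S := by
  rw [abs_le] at hx hy
  rcases hb with (rfl | rfl) | (rfl | rfl)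
  · exact ⟨-1, 2, 1 + -y, by simp, Or.inr ⟨by ring, by linarith, by linarith, by ring, by ring⟩⟩
  · exact ⟨1, 2, 1 + y, by simp, Or.inr ⟨by ring, by linarith, by linarith, by ring, by ring⟩⟩
  · exact ⟨-1, 1 + x, 0, by simp,
      Or.inl ⟨by linarith, by linarith, by ring, by ring, by ring⟩⟩
  · exact ⟨1, 1 - x, 0, by simp,
      Or.inl ⟨by linarith, by linarith, by ring, by ring, by ring⟩⟩

theorem OnStair.step {e k x y T S x' y' τ σ : ℝ} (he : e = 1 ∨ e = -1)
    (h : OnStair e k x y T S) (hs : SquareStep x y x' y' τ σ) (hx : |x'| ≤ 1) (hy : |y'| ≤ 1) :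
    OnStair e k x' y' (T + τ) (S + σ) ∨ OnStair (-e) (k + 1) x' y' (T + τ) (S + σ) := by
  rw [abs_le] at hx hy
  obtain ⟨hx1, hx2⟩ := hx
  obtain ⟨hy1, hy2⟩ := hy
  unfold OnStair
  rcases he with rfl | rfl <;>
  rcases h with ⟨h1, h2, h3, h4, h5⟩ | ⟨h1, h2, h3, h4, h5⟩ <;>
  rcases hs with ⟨g0, rfl, rfl, (g | g), g'⟩ | ⟨g0, rfl, rfl, (g | g), g'⟩ <;>
  rw [g] at g' <;>
  first
  | exact Or.inl (Or.inl ⟨by linarith, by linarith, by linarith, by linarith, by linarith⟩)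
  | exact Or.inl (Or.inr ⟨by linarith, by linarith, by linarith, by linarith, by linarith⟩)
  | exact Or.inr (Or.inl ⟨by linarith, by linarith, by linarith, by linarith, by linarith⟩)

theorem onStair_of_steps {e T S : ℝ} (he : e = 1 ∨ e = -1) {x y τ σ : ℕ → ℝ} {m : ℕ}
    (h0 : OnStair e 0 (x 0) (y 0) T S)
    (hx : ∀ i ≤ m, |x i| ≤ 1) (hy : ∀ i ≤ m, |y i| ≤ 1)
    (hs : ∀ i < m, SquareStep (x i) (y i) (x (i + 1)) (y (i + 1)) (τ i) (σ i)) :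
    ∃ k : ℕ, OnStair (e * (-1) ^ k) k (x m) (y m)
      (T + ∑ i ∈ Finset.range m, τ i) (S + ∑ i ∈ Finset.range m, σ i) := by
  induction m with
  | zero => exact ⟨0, by simpa using h0⟩
  | succ m ih =>
    obtain ⟨k, hk⟩ := ih (fun i hi => hx i (by omega)) (fun i hi => hy i (by omega))
      fun i hi => hs i (by omega)
    have he' : e * (-1) ^ k = 1 ∨ e * (-1) ^ k = -1 := by
      rcases he with rfl | rfl <;> rcases neg_one_pow_eq_or ℝ k with h | h <;> simp [h]
    rw [Finset.sum_range_succ, Finset.sum_range_succ, ← add_assoc, ← add_assoc]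
    rcases hk.step he' (hs m (by omega)) (hx _ le_rfl) (hy _ le_rfl) with h | h
    · exact ⟨k, h⟩
    · refine ⟨k + 1, ?_⟩
      rw [pow_succ, ← mul_assoc, mul_neg_one, Nat.cast_succ]
      exact h

/-- The content of `FlowRel` for the segment. -/
theorem OnStair.flow {e T S t s x y x' y' : ℝ} (he : e = 1 ∨ e = -1) {k : ℕ}
    (ht : 0 ≤ t) (hs : 0 ≤ s) (h0 : OnStair e 0 x y T S)
    (h : OnStair (e * (-1) ^ k) k x' y' (T + t) (S + s)) :
    (t < 2 → s ≤ 2) ∧ (s < 2 → t ≤ 2) ∧ (t = 2 → x' = -x) ∧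
      (t = 2 → s = 2 ∨ x = 1 ∨ x = -1) ∧ (s = 2 → y' = -y) ∧
      (s = 2 → t = 2 ∨ y = 1 ∨ y = -1) ∧
      (x = 1 → t ≤ 2 → x - x' = t) ∧ (x = -1 → t ≤ 2 → x' - x = t) ∧
      (y = 1 → s ≤ 2 → y - y' = s) ∧ (y = -1 → s ≤ 2 → y' - y = s) := by
  have hk : k ≤ 2 ∨ (6 ≤ T + t ∧ 6 ≤ S + s) := by
    by_cases hk : k ≤ 2
    · exact Or.inl hk
    · have : (3 : ℝ) ≤ k := by exact_mod_cast (by omega : 3 ≤ k)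
      rcases h with ⟨h1, h2, h3, -, -⟩ | ⟨h1, h2, h3, -, -⟩ <;>
      exact Or.inr ⟨by linarith, by linarith⟩
  rcases hk with hk | ⟨hT, hS⟩
  · rcases he with rfl | rfl <;> interval_cases k <;> unfold OnStair at h h0 <;>
    norm_num at h h0 <;>
    rcases h0 with ⟨h1, h2, h3, h4, h5⟩ | ⟨h1, h2, h3, h4, h5⟩ <;>
    rcases h with ⟨g1, g2, g3, g4, g5⟩ | ⟨g1, g2, g3, g4, g5⟩ <;>
    refine ⟨?_, ?_, ?_, ?_, ?_, ?_, ?_, ?_, ?_, ?_⟩ <;> intros <;>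
    first
    | linarith
    | exact Or.inl (by linarith)
    | exact Or.inr (Or.inl (by linarith))
    | exact Or.inr (Or.inr (by linarith))
  · have hb : T ≤ 2 ∧ S ≤ 2 := by
      rcases h0 with ⟨h1, h2, h3, -, -⟩ | ⟨h1, h2, h3, -, -⟩ <;>
      exact ⟨by linarith, by linarith⟩
    refine ⟨?_, ?_, ?_, ?_, ?_, ?_, ?_, ?_, ?_, ?_⟩ <;> intros <;> linarith [hb.1, hb.2]

theorem pairing_fin_one (u x : Fin 1 → ℝ) : pairing u x = u 0 * x 0 := by simp [pairing]

theorem exists_mem_seg_iff (x : Fin 1 → ℝ) :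
    (∃ u ∈ ({1, -1} : Set (Fin 1 → ℝ)), pairing u x = 1) ↔ x 0 = 1 ∨ x 0 = -1 := by
  simp [pairing_fin_one, neg_eq_iff_eq_neg]

theorem IsStep.squareStep {q p q' p' : Fin 1 → ℝ} {τ σ : ℝ}
    (h : IsStep {1, -1} {1, -1} q p q' p' τ σ) :
    SquareStep (q 0) (p 0) (q' 0) (p' 0) τ σ := by
  rcases h with ⟨h0, e, rfl, u, hu, e1, rfl⟩ | ⟨h0, e, rfl, w, hw, e1, rfl⟩
  · refine Or.inl ⟨h0, e, rfl, (exists_mem_seg_iff _).1 ⟨u, hu, e1⟩, ?_⟩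
    rcases hu with rfl | rfl <;> simp [pairing_fin_one, neg_eq_iff_eq_neg] at e1 <;> simp [e1]
  · refine Or.inr ⟨h0, e, rfl, (exists_mem_seg_iff _).1 ⟨w, hw, e1⟩, ?_⟩
    rcases hw with rfl | rfl <;> simp [pairing_fin_one, neg_eq_iff_eq_neg] at e1 <;> simp [e1]

theorem IsPath.flowRel_seg {m : ℕ} {q p : ℕ → Fin 1 → ℝ} {τ σ : ℕ → ℝ}
    (h : IsPath {1, -1} {1, -1} m q p τ σ) :
    FlowRel {1, -1} {1, -1} (q 0) (p 0) (q m) (p m) (∑ i ∈ Finset.range m, τ i)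
      (∑ i ∈ Finset.range m, σ i) := by
  have hx : ∀ i ≤ m, |q i 0| ≤ 1 := fun i hi => DualPair.seg.bdA _ 1 (h.state i hi).memq 0
  have hy : ∀ i ≤ m, |p i 0| ≤ 1 := fun i hi => DualPair.seg.bdA _ 1 (h.state i hi).memp 0
  obtain ⟨e, T, S, he, h0⟩ := exists_onStair (hx 0 (Nat.zero_le m)) (hy 0 (Nat.zero_le m))
    ((h.state 0 (Nat.zero_le m)).bdry.imp (exists_mem_seg_iff _).1 (exists_mem_seg_iff _).1)
  obtain ⟨k, hk⟩ := onStair_of_steps he h0 hx hy fun i hi => (h.step i hi).squareStep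
  obtain ⟨h1, h2, h3, h4, h5, h6, h7, h8, h9, h10⟩ := h0.flow he h.t_nonneg h.s_nonneg hk
  refine ⟨h1, h2, fun ht => ?_, fun ht => (h4 ht).imp_right (exists_mem_seg_iff _).2,
    fun hs => ?_, fun hs => (h6 hs).imp_right (exists_mem_seg_iff _).2, ?_, ?_⟩
  · funext i
    rw [Subsingleton.elim i 0]
    exact h3 ht
  · funext i
    rw [Subsingleton.elim i 0]
    exact h5 hs
  · rintro u (rfl | rfl) hu ht
    · simpa [pairing_fin_one] using h7 (by simpa [pairing_fin_one] using hu) ht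
    · simpa [pairing_fin_one] using h8 (by simpa [pairing_fin_one, neg_eq_iff_eq_neg] using hu) ht
  · rintro u (rfl | rfl) hu ht
    · simpa [pairing_fin_one] using h9 (by simpa [pairing_fin_one] using hu) ht
    · simpa [pairing_fin_one] using h10 (by simpa [pairing_fin_one, neg_eq_iff_eq_neg] using hu) ht

end Segment


section Product

variable {k l : ℕ}

@[simp]
theorem splitL_add (x y : Fin (k + l) → ℝ) : splitL (x + y) = splitL x + splitL y := rfl

@[simp]
theorem splitR_add (x y : Fin (k + l) → ℝ) : splitR (x + y) = splitR x + splitR y := rfl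

@[simp]
theorem splitL_sub (x y : Fin (k + l) → ℝ) : splitL (x - y) = splitL x - splitL y := rfl

@[simp]
theorem splitR_sub (x y : Fin (k + l) → ℝ) : splitR (x - y) = splitR x - splitR y := rfl

@[simp]
theorem splitL_smul (c : ℝ) (x : Fin (k + l) → ℝ) : splitL (c • x) = c • splitL x := rfl

@[simp]
theorem splitR_smul (c : ℝ) (x : Fin (k + l) → ℝ) : splitR (c • x) = c • splitR x := rfl

attribute [simp] splitL_append splitR_append

/-- If the momentum never meets the boundary, the path is a partial momentum move. -/
theorem IsPath.flowRel_of_interior {n : ℕ} {A B : Set (Fin n → ℝ)} (hd : DualPair A B) {m : ℕ}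
    {q p : ℕ → Fin n → ℝ} {τ σ : ℕ → ℝ} (h : IsPath A B m q p τ σ)
    (hp : ∀ i ≤ m, ¬∃ w ∈ B, pairing w (p i) = 1) :
    FlowRel A B (q 0) (p 0) (q m) (p m) (∑ i ∈ Finset.range m, τ i)
      (∑ i ∈ Finset.range m, σ i) := by
  obtain ⟨u, hu, e⟩ := (h.state 0 (Nat.zero_le m)).bdry.resolve_right (hp 0 (Nat.zero_le m))
  have key : ∀ i ≤ m, q i = q 0 ∧ ∑ j ∈ Finset.range i, τ j = 0 ∧
      p i = p 0 - (∑ j ∈ Finset.range i, σ j) • u := by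
    intro i
    induction i with
    | zero => simp
    | succ i ih =>
      intro hi
      obtain ⟨h1, h2, h3⟩ := ih (by omega)
      rcases h.step i (by omega) with ⟨-, e0, eq, v, hv, ev, ep⟩ | ⟨-, -, -, hw⟩
      · have hvu : v = u := (h.state 0 (Nat.zero_le m)).uniq v hv u hu (by rwa [← h1]) e
        refine ⟨eq.trans h1, by rw [Finset.sum_range_succ, h2, e0, add_zero], ?_⟩
        rw [ep, h3, hvu, Finset.sum_range_succ, add_smul, sub_sub]
      · obtain ⟨w, hw, ew, -⟩ := hw
        exact (hp i (by omega) ⟨w, hw, ew⟩).elim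
  obtain ⟨h1, h2, h3⟩ := key m le_rfl
  have hs : ∑ j ∈ Finset.range m, σ j < 2 := by
    obtain ⟨w, hw, ew⟩ := hd.exB u hu
    have hlt : pairing w (p 0) < 1 := lt_of_le_of_ne ((h.state 0 (Nat.zero_le m)).memp w hw)
      fun e => hp 0 (Nat.zero_le m) ⟨w, hw, e⟩
    have := hd.swap.neg_one_le (h.state m le_rfl).memp hw
    rw [h3, pairing_sub_right, pairing_smul_right, pairing_comm w u, ew] at this
    linarith
  rw [h1, h2]
  refine ⟨fun _ => hs.le, fun _ => by norm_num, fun e => by norm_num at e,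
    fun e => by norm_num at e, fun e => absurd e hs.ne, fun e => absurd e hs.ne,
    fun _ _ _ _ => by simp, fun w hw e => (hp 0 (Nat.zero_le m) ⟨w, hw, e⟩).elim⟩

/-- The momentum component `p` of a factor has level at most `a`, and `(q, a⁻¹ p)` is a nonsingular
state of that factor. -/
structure HalfState {n : ℕ} (A B : Set (Fin n → ℝ)) (a : ℝ) (q p : Fin n → ℝ) : Prop where
  le : ∀ w ∈ B, pairing w p ≤ a
  uni : ∀ w ∈ B, ∀ w' ∈ B, pairing w p = a → pairing w' p = a → w = w'
  bdry : (∃ u ∈ A, pairing u q = 1) ∨ ∃ w ∈ B, pairing w p = a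

theorem pairing_inv_smul_eq_one {n : ℕ} {a : ℝ} (ha : 0 < a) (w p : Fin n → ℝ) :
    pairing w (a⁻¹ • p) = 1 ↔ pairing w p = a := by
  rw [pairing_smul_right, inv_mul_eq_iff_eq_mul₀ ha.ne', mul_one]

theorem HalfState.isState {n : ℕ} {A B : Set (Fin n → ℝ)} {a : ℝ} (ha : 0 < a)
    {q p : Fin n → ℝ} (h : HalfState A B a q p) (hq : q ∈ body A)
    (hu : ∀ u ∈ A, ∀ v ∈ A, pairing u q = 1 → pairing v q = 1 → u = v) :
    IsState A B q (a⁻¹ • p) where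
  memq := hq
  memp w hw := by
    rw [pairing_smul_right, inv_mul_le_iff₀ ha, mul_one]
    exact h.le w hw
  uniq := hu
  unip u hu v hv e e' := h.uni u hu v hv ((pairing_inv_smul_eq_one ha _ _).1 e)
    ((pairing_inv_smul_eq_one ha _ _).1 e')
  bdry := h.bdry.imp_right fun ⟨w, hw, e⟩ => ⟨w, hw, (pairing_inv_smul_eq_one ha _ _).2 e⟩

variable {A B : Set (Fin k → ℝ)} {A' B' : Set (Fin l → ℝ)}

theorem IsState.uniqL {q p : Fin (k + l) → ℝ}
    (hs : IsState (prodNormals A A') (prodVertices B B') q p) :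
    ∀ u ∈ A, ∀ v ∈ A, pairing u (splitL q) = 1 → pairing v (splitL q) = 1 → u = v :=
  fun u hu v hv e e' => (append_inj (hs.uniq _ (Or.inl ⟨u, hu, rfl⟩) _ (Or.inl ⟨v, hv, rfl⟩)
    (by simpa using e) (by simpa using e'))).1

theorem IsState.uniqR {q p : Fin (k + l) → ℝ}
    (hs : IsState (prodNormals A A') (prodVertices B B') q p) :
    ∀ u ∈ A', ∀ v ∈ A', pairing u (splitR q) = 1 → pairing v (splitR q) = 1 → u = v :=
  fun u hu v hv e e' => (append_inj (hs.uniq _ (Or.inr ⟨u, hu, rfl⟩) _ (Or.inr ⟨v, hv, rfl⟩)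
    (by simpa using e) (by simpa using e'))).2

/-- At a nonsingular state only one factor of the coordinate lies on the boundary. -/
theorem IsState.not_both (h : DualPair A B) {q p : Fin (k + l) → ℝ}
    (hs : IsState (prodNormals A A') (prodVertices B B') q p)
    (hl : ∃ u ∈ A, pairing u (splitL q) = 1) (hr : ∃ u ∈ A', pairing u (splitR q) = 1) :
    False := by
  obtain ⟨u, hu, e⟩ := hl
  obtain ⟨v, hv, e'⟩ := hr
  have := hs.uniq _ (Or.inl ⟨u, hu, rfl⟩) _ (Or.inr ⟨v, hv, rfl⟩) (by simpa using e)
    (by simpa using e')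
  exact h.ne_zero hu (append_inj this).1

theorem IsState.halfL {q p : Fin (k + l) → ℝ} {a b : ℝ} (hab : a + b = 1)
    (hs : IsState (prodNormals A A') (prodVertices B B') q p)
    (hr : ∃ w ∈ B', pairing w (splitR p) = b)
    (hl : (∃ u ∈ A, pairing u (splitL q) = 1) ∨ ∃ w ∈ B, pairing w (splitL p) = a) :
    HalfState A B a (splitL q) (splitL p) := by
  obtain ⟨w', hw', e⟩ := hr
  refine ⟨fun w hw => ?_, fun w hw v hv ew ev => ?_, hl⟩
  · have := hs.memp _ ⟨w, hw, w', hw', rfl⟩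
    rw [pairing_append_left] at this
    linarith
  · exact (append_inj (hs.unip _ ⟨w, hw, w', hw', rfl⟩ _ ⟨v, hv, w', hw', rfl⟩
      (by rw [pairing_append_left]; linarith) (by rw [pairing_append_left]; linarith))).1

theorem IsState.halfR {q p : Fin (k + l) → ℝ} {a b : ℝ} (hab : a + b = 1)
    (hs : IsState (prodNormals A A') (prodVertices B B') q p)
    (hl : ∃ w ∈ B, pairing w (splitL p) = a)
    (hr : (∃ u ∈ A', pairing u (splitR q) = 1) ∨ ∃ w ∈ B', pairing w (splitR p) = b) :
    HalfState A' B' b (splitR q) (splitR p) := by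
  obtain ⟨w', hw', e⟩ := hl
  refine ⟨fun w hw => ?_, fun w hw v hv ew ev => ?_, hr⟩
  · have := hs.memp _ ⟨w', hw', w, hw, rfl⟩
    rw [pairing_append_left] at this
    linarith
  · exact (append_inj (hs.unip _ ⟨w', hw', w, hw, rfl⟩ _ ⟨w', hw', v, hv, rfl⟩
      (by rw [pairing_append_left]; linarith) (by rw [pairing_append_left]; linarith))).2

/-- Both factors of a state of a product, with momentum levels `a` and `b`. -/
def HalfStates (A B : Set (Fin k → ℝ)) (A' B' : Set (Fin l → ℝ)) (a b : ℝ)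
    (q p : Fin (k + l) → ℝ) : Prop :=
  HalfState A B a (splitL q) (splitL p) ∧ HalfState A' B' b (splitR q) (splitR p)

theorem HalfStates.levels {q p : Fin (k + l) → ℝ} {a b : ℝ} (hab : a + b = 1)
    (h : HalfStates A B A' B' a b q p) {w : Fin k → ℝ} {w' : Fin l → ℝ} (hw : w ∈ B)
    (hw' : w' ∈ B') (e : pairing (Fin.append w w') p = 1) :
    pairing w (splitL p) = a ∧ pairing w' (splitR p) = b := by
  have h1 := h.1.le w hw
  have h2 := h.2.le w' hw'
  rw [pairing_append_left] at e
  constructor <;> linarith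

theorem HalfStates.of_momentum_step (h : DualPair A B) {q p p' u : Fin (k + l) → ℝ}
    {a b c : ℝ} (hab : a + b = 1) (hs : IsState (prodNormals A A') (prodVertices B B') q p)
    (hs' : IsState (prodNormals A A') (prodVertices B B') q p')
    (hh : HalfStates A B A' B' a b q p) (hu : u ∈ prodNormals A A') (e : pairing u q = 1)
    (ep : p' = p + c • u) : HalfStates A B A' B' a b q p' := by
  rcases hu with ⟨u, hu, rfl⟩ | ⟨u, hu, rfl⟩
  · have hl : ∃ u ∈ A, pairing u (splitL q) = 1 := ⟨u, hu, by simpa using e⟩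
    have er : splitR p' = splitR p := by simp [ep]
    have hr := hh.2.bdry.resolve_left fun hr => hs.not_both h hl hr
    exact ⟨hs'.halfL hab (by rwa [er]) (Or.inl hl), by rw [er]; exact hh.2⟩
  · have hr : ∃ u ∈ A', pairing u (splitR q) = 1 := ⟨u, hu, by simpa using e⟩
    have el : splitL p' = splitL p := by simp [ep]
    have hl := hh.1.bdry.resolve_left fun hl => hs.not_both h hl hr
    exact ⟨by rw [el]; exact hh.1, hs'.halfR hab (by rwa [el]) (Or.inl hr)⟩

theorem HalfStates.of_active {q p : Fin (k + l) → ℝ} {a b : ℝ} (hab : a + b = 1)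
    (hs : IsState (prodNormals A A') (prodVertices B B') q p)
    {w : Fin k → ℝ} {w' : Fin l → ℝ} (hw : w ∈ B) (hw' : w' ∈ B')
    (e : pairing w (splitL p) = a) (e' : pairing w' (splitR p) = b) :
    HalfStates A B A' B' a b q p :=
  ⟨hs.halfL hab ⟨w', hw', e'⟩ (Or.inr ⟨w, hw, e⟩), hs.halfR hab ⟨w, hw, e⟩ (Or.inr ⟨w', hw', e'⟩)⟩

theorem HalfStates.iff_of_step (h : DualPair A B) {q p q' p' : Fin (k + l) → ℝ} {a b τ σ : ℝ}
    (hab : a + b = 1) (hs : IsState (prodNormals A A') (prodVertices B B') q p)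
    (hs' : IsState (prodNormals A A') (prodVertices B B') q' p')
    (hstep : IsStep (prodNormals A A') (prodVertices B B') q p q' p' τ σ) :
    HalfStates A B A' B' a b q p ↔ HalfStates A B A' B' a b q' p' := by
  rcases hstep with ⟨-, -, rfl, u, hu, e, ep⟩ | ⟨-, -, rfl, _, ⟨w, hw, w', hw', rfl⟩, e, -⟩
  · refine ⟨fun hh => hh.of_momentum_step (c := -σ) h hab hs hs' hu e (by rw [ep]; module),
      fun hh => hh.of_momentum_step (c := σ) h hab hs' hs hu e (by rw [ep]; module)⟩
  · exact ⟨fun hh => of_active hab hs' hw hw' (hh.levels hab hw hw' e).1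
        (hh.levels hab hw hw' e).2,
      fun hh => of_active hab hs hw hw' (hh.levels hab hw hw' e).1 (hh.levels hab hw hw' e).2⟩

theorem IsStep.zero_of_bdry {n : ℕ} {A B : Set (Fin n → ℝ)} {q p : Fin n → ℝ}
    (h : IsState A B q p) : IsStep A B q p q p 0 0 := by
  rcases h.bdry with ⟨u, hu, e⟩ | ⟨w, hw, e⟩
  · exact Or.inl ⟨le_rfl, rfl, rfl, u, hu, e, by simp⟩
  · exact Or.inr ⟨le_rfl, rfl, rfl, w, hw, e, by simp⟩

/-- A step in a product splits into simultaneous steps of the factors. -/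
theorem IsStep.split {q p q' p' : Fin (k + l) → ℝ} {a b τ σ : ℝ} (ha : 0 < a) (hb : 0 < b)
    (hab : a + b = 1) (hs : IsState (prodNormals A A') (prodVertices B B') q p)
    (hh : HalfStates A B A' B' a b q p)
    (hstep : IsStep (prodNormals A A') (prodVertices B B') q p q' p' τ σ) :
    ∃ σ₁ σ₂, σ = a * σ₁ + b * σ₂ ∧
      IsStep A B (splitL q) (a⁻¹ • splitL p) (splitL q') (a⁻¹ • splitL p') τ σ₁ ∧
      IsStep A' B' (splitR q) (b⁻¹ • splitR p) (splitR q') (b⁻¹ • splitR p') τ σ₂ := by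
  have hq := hs.memq
  rw [body_prodNormals] at hq
  have h1 := hh.1.isState ha hq.1 hs.uniqL
  have h2 := hh.2.isState hb hq.2 hs.uniqR
  rcases hstep with ⟨h0, rfl, rfl, _, ⟨u, hu, rfl⟩ | ⟨u, hu, rfl⟩, e, rfl⟩ |
    ⟨h0, rfl, rfl, _, ⟨w, hw, w', hw', rfl⟩, e, rfl⟩
  · refine ⟨σ / a, 0, by field_simp; ring, Or.inl ⟨by positivity, rfl, rfl, u, hu,
      by simpa using e, ?_⟩, ?_⟩
    · simp [smul_sub, smul_smul, div_eq_inv_mul]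
    · simpa using IsStep.zero_of_bdry h2
  · refine ⟨0, σ / b, by field_simp; ring, ?_, Or.inl ⟨by positivity, rfl, rfl, u, hu,
      by simpa using e, ?_⟩⟩
    · simpa using IsStep.zero_of_bdry h1
    · simp [smul_sub, smul_smul, div_eq_inv_mul]
  · obtain ⟨e1, e2⟩ := hh.levels hab hw hw' e
    exact ⟨0, 0, by simp, Or.inr ⟨h0, rfl, rfl, w, hw, (pairing_inv_smul_eq_one ha _ _).2 e1,
      by simp⟩, Or.inr ⟨h0, rfl, rfl, w', hw', (pairing_inv_smul_eq_one hb _ _).2 e2, by simp⟩⟩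

theorem FlowRel.prod (h : DualPair A B) {q p q' p' : Fin (k + l) → ℝ} {a b t s₁ s₂ : ℝ}
    (ha : 0 < a) (hb : 0 < b) (hab : a + b = 1)
    (hs : IsState (prodNormals A A') (prodVertices B B') q p)
    (hh : HalfStates A B A' B' a b q p)
    (h1 : FlowRel A B (splitL q) (a⁻¹ • splitL p) (splitL q') (a⁻¹ • splitL p') t s₁)
    (h2 : FlowRel A' B' (splitR q) (b⁻¹ • splitR p) (splitR q') (b⁻¹ • splitR p') t s₂) :
    FlowRel (prodNormals A A') (prodVertices B B') q p q' p' t (a * s₁ + b * s₂) := by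
  have balance : a * s₁ + b * s₂ ≤ 2 → s₁ ≤ 2 ∧ s₂ ≤ 2 := by
    intro hle
    by_contra hcon
    have hor : (2 < s₁ ∧ s₂ < 2) ∨ (s₁ < 2 ∧ 2 < s₂) := by
      rcases le_or_gt s₁ 2 with hs1 | hs1
      · have hs2 : 2 < s₂ := lt_of_not_ge fun h => hcon ⟨hs1, h⟩
        exact Or.inr ⟨by nlinarith, hs2⟩
      · exact Or.inl ⟨hs1, by nlinarith⟩
    have ht : t = 2 := by
      rcases hor with ⟨g1, g2⟩ | ⟨g1, g2⟩
      · exact le_antisymm (h2.t_le g2) (not_lt.1 fun g => absurd (h1.s_le g) (not_le.2 g1))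
      · exact le_antisymm (h1.t_le g1) (not_lt.1 fun g => absurd (h2.s_le g) (not_le.2 g2))
    exact hs.not_both h
      ((h1.q_bdry ht).resolve_left fun e => by rcases hor with g | g <;> linarith [g.1, g.2])
      ((h2.q_bdry ht).resolve_left fun e => by rcases hor with g | g <;> linarith [g.1, g.2])
  have both : a * s₁ + b * s₂ = 2 → s₁ = 2 ∧ s₂ = 2 := by
    intro e
    obtain ⟨g1, g2⟩ := balance e.le
    exact ⟨by nlinarith, by nlinarith⟩
  refine ⟨fun ht => ?_, fun hlt => ?_, fun ht => ?_, fun ht => ?_, fun e => ?_, fun e => ?_,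
    ?_, ?_⟩
  · nlinarith [h1.s_le ht, h2.s_le ht]
  · by_contra hcon
    have g1 : 2 ≤ s₁ := not_lt.1 fun g => hcon (h1.t_le g)
    have g2 : 2 ≤ s₂ := not_lt.1 fun g => hcon (h2.t_le g)
    nlinarith
  · exact ext_split (h1.q_neg ht) (h2.q_neg ht)
  · rcases h1.q_bdry ht with e1 | ⟨u, hu, e⟩
    · rcases h2.q_bdry ht with e2 | ⟨u, hu, e⟩
      · exact Or.inl (by rw [e1, e2]; linarith)
      · exact Or.inr ⟨_, Or.inr ⟨u, hu, rfl⟩, by simpa using e⟩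
    · exact Or.inr ⟨_, Or.inl ⟨u, hu, rfl⟩, by simpa using e⟩
  · obtain ⟨e1, e2⟩ := both e
    refine ext_split ?_ ?_
    · have := h1.p_neg e1
      rw [← smul_neg] at this
      exact smul_right_injective _ (inv_ne_zero ha.ne') this
    · have := h2.p_neg e2
      rw [← smul_neg] at this
      exact smul_right_injective _ (inv_ne_zero hb.ne') this
  · obtain ⟨e1, e2⟩ := both e
    rcases h1.p_bdry e1 with ht | ⟨w, hw, ew⟩
    · exact Or.inl ht
    · rcases h2.p_bdry e2 with ht | ⟨w', hw', ew'⟩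
      · exact Or.inl ht
      · rw [pairing_inv_smul_eq_one ha] at ew
        rw [pairing_inv_smul_eq_one hb] at ew'
        exact Or.inr ⟨_, ⟨w, hw, w', hw', rfl⟩, by rw [pairing_append_left, ew, ew', hab]⟩
  · rintro _ (⟨u, hu, rfl⟩ | ⟨u, hu, rfl⟩) e ht
    · simpa using h1.q_geod u hu (by simpa using e) ht
    · simpa using h2.q_geod u hu (by simpa using e) ht
  · rintro _ ⟨w, hw, w', hw', rfl⟩ e hle
    obtain ⟨e1, e2⟩ := hh.levels hab hw hw' e
    obtain ⟨g1, g2⟩ := balance hle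
    have f1 := h1.p_geod w hw ((pairing_inv_smul_eq_one ha _ _).2 e1) g1
    have f2 := h2.p_geod w' hw' ((pairing_inv_smul_eq_one hb _ _).2 e2) g2
    rw [← smul_sub, pairing_smul_right, inv_mul_eq_iff_eq_mul₀ ha.ne'] at f1
    rw [← smul_sub, pairing_smul_right, inv_mul_eq_iff_eq_mul₀ hb.ne'] at f2
    rw [pairing_append_left, splitL_sub, splitR_sub, f1, f2]

/-- The two components of a momentum on a single facet have positive levels. -/
theorem IsState.levels_pos (h : DualPair A B) (h' : DualPair A' B') {q p : Fin (k + l) → ℝ}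
    (hs : IsState (prodNormals A A') (prodVertices B B') q p) {w : Fin k → ℝ} {w' : Fin l → ℝ}
    (hw : w ∈ B) (hw' : w' ∈ B') (e : pairing (Fin.append w w') p = 1) :
    0 < pairing w (splitL p) ∧ 0 < pairing w' (splitR p) := by
  have aux : ∀ {n : ℕ} {v : Fin n → ℝ}, -v = v → v = 0 := fun hv => by
    funext i
    have := congrFun hv i
    simp only [Pi.neg_apply] at this
    simp only [Pi.zero_apply]
    linarith
  constructor
  · by_contra hcon
    have m := hs.memp _ ⟨-w, h.negB w hw, w', hw', rfl⟩
    have e' := e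
    rw [pairing_append_left] at m e'
    rw [pairing_neg_left] at m
    have := hs.unip _ ⟨-w, h.negB w hw, w', hw', rfl⟩ _ ⟨w, hw, w', hw', rfl⟩
      (by rw [pairing_append_left, pairing_neg_left]; linarith) e
    exact h.swap.ne_zero hw (aux (append_inj this).1)
  · by_contra hcon
    have m := hs.memp _ ⟨w, hw, -w', h'.negB w' hw', rfl⟩
    have e' := e
    rw [pairing_append_left] at m e'
    rw [pairing_neg_left] at m
    have := hs.unip _ ⟨w, hw, -w', h'.negB w' hw', rfl⟩ _ ⟨w, hw, w', hw', rfl⟩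
      (by rw [pairing_append_left, pairing_neg_left]; linarith) e
    exact h'.swap.ne_zero hw' (aux (append_inj this).2)

theorem IsPath.halfStates (h : DualPair A B) {m : ℕ} {q p : ℕ → Fin (k + l) → ℝ}
    {τ σ : ℕ → ℝ} {a b : ℝ} (hab : a + b = 1)
    (hp : IsPath (prodNormals A A') (prodVertices B B') m q p τ σ) {i : ℕ} (hi : i ≤ m)
    (hh : HalfStates A B A' B' a b (q i) (p i)) :
    ∀ j ≤ m, HalfStates A B A' B' a b (q j) (p j) := by
  have key : ∀ j ≤ m, (HalfStates A B A' B' a b (q 0) (p 0) ↔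
      HalfStates A B A' B' a b (q j) (p j)) := by
    intro j
    induction j with
    | zero => simp
    | succ j ih =>
      intro hj
      exact (ih (by omega)).trans (HalfStates.iff_of_step h hab (hp.state j (by omega))
        (hp.state (j + 1) hj) (hp.step j (by omega)))
  exact fun j hj => (key j hj).1 ((key i hi).2 hh)

end Product

/-- Every path of the Hanner billiard satisfies `FlowRel`. -/
theorem HannerPair.flowRel {n : ℕ} {A B : Set (Fin n → ℝ)} (h : HannerPair n A B) :
    ∀ (m : ℕ) (q p : ℕ → Fin n → ℝ) (τ σ : ℕ → ℝ), IsPath A B m q p τ σ →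
      FlowRel A B (q 0) (p 0) (q m) (p m) (∑ i ∈ Finset.range m, τ i)
        (∑ i ∈ Finset.range m, σ i) := by
  induction h with
  | seg => exact fun _ _ _ _ _ hp => hp.flowRel_seg
  | swap h ih =>
    intro m q p τ σ hp
    exact FlowRel.of_swap h.swap.dualPair (ih m _ _ _ _ (hp.swap h.swap.dualPair))
  | @prod k l A B A' B' hK hL ihK ihL =>
    intro m q p τ σ hp
    have h := hK.dualPair
    have h' := hL.dualPair
    by_cases hinterior : ∀ i ≤ m, ¬∃ w ∈ prodVertices B B', pairing w (p i) = 1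
    · exact hp.flowRel_of_interior (h.prod h') hinterior
    push Not at hinterior
    obtain ⟨i, hi, _, ⟨w, hw, w', hw', rfl⟩, e⟩ := hinterior
    obtain ⟨ha, hb⟩ := (hp.state i hi).levels_pos h h' hw hw' e
    have hab := e
    rw [pairing_append_left] at hab
    have hh := hp.halfStates h hab hi (HalfStates.of_active hab (hp.state i hi) hw hw' rfl rfl)
    generalize pairing w (splitL (p i)) = a at *
    generalize pairing w' (splitR (p i)) = b at *
    have hsplit : ∀ j, ∃ σ₁ σ₂, j < m → σ j = a * σ₁ + b * σ₂ ∧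
        IsStep A B (splitL (q j)) (a⁻¹ • splitL (p j)) (splitL (q (j + 1)))
          (a⁻¹ • splitL (p (j + 1))) (τ j) σ₁ ∧
        IsStep A' B' (splitR (q j)) (b⁻¹ • splitR (p j)) (splitR (q (j + 1)))
          (b⁻¹ • splitR (p (j + 1))) (τ j) σ₂ := by
      intro j
      by_cases hj : j < m
      · obtain ⟨σ₁, σ₂, hσ⟩ := (hp.step j hj).split ha hb hab (hp.state j hj.le) (hh j hj.le)
        exact ⟨σ₁, σ₂, fun _ => hσ⟩
      · exact ⟨0, 0, fun hj' => absurd hj' hj⟩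
    choose σ₁ σ₂ hσ using hsplit
    have hsum : ∑ j ∈ Finset.range m, σ j =
        a * ∑ j ∈ Finset.range m, σ₁ j + b * ∑ j ∈ Finset.range m, σ₂ j := by
      rw [Finset.mul_sum, Finset.mul_sum, ← Finset.sum_add_distrib]
      exact Finset.sum_congr rfl fun j hj => (hσ j (Finset.mem_range.1 hj)).1
    have hq : ∀ j ≤ m, splitL (q j) ∈ body A ∧ splitR (q j) ∈ body A' := fun j hj => by
      have := (hp.state j hj).memq
      rwa [body_prodNormals] at this
    rw [hsum]
    refine FlowRel.prod h ha hb hab (hp.state 0 (Nat.zero_le m)) (hh 0 (Nat.zero_le m))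
      (ihK m (fun j => splitL (q j)) (fun j => a⁻¹ • splitL (p j)) τ σ₁ ⟨fun j hj => ?_,
        fun j hj => (hσ j hj).2.1⟩)
      (ihL m (fun j => splitR (q j)) (fun j => b⁻¹ • splitR (p j)) τ σ₂ ⟨fun j hj => ?_,
        fun j hj => (hσ j hj).2.2⟩)
    · exact (hh j hj).1.isState ha (hq j hj).1 (hp.state j hj).uniqL
    · exact (hh j hj).2.isState hb (hq j hj).2 (hp.state j hj).uniqR


/-- `(q', p')` can be reached from `(q, p)` by moving the coordinate for time `t` and the momentum
for time `s`, through nonsingular states. -/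
inductive Reach {n : ℕ} (A B : Set (Fin n → ℝ)) (q p : Fin n → ℝ) :
    (Fin n → ℝ) → (Fin n → ℝ) → ℝ → ℝ → Prop
  | refl : IsState A B q p → Reach A B q p q p 0 0
  | step {q' p' q'' p'' : Fin n → ℝ} {t s τ σ : ℝ} : Reach A B q p q' p' t s →
      IsState A B q'' p'' → IsStep A B q' p' q'' p'' τ σ →
        Reach A B q p q'' p'' (t + τ) (s + σ)

theorem Reach.exists_path {n : ℕ} {A B : Set (Fin n → ℝ)} {q p q' p' : Fin n → ℝ} {t s : ℝ}
    (h : Reach A B q p q' p' t s) :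
    ∃ (m : ℕ) (Q P : ℕ → Fin n → ℝ) (τ σ : ℕ → ℝ), IsPath A B m Q P τ σ ∧ Q 0 = q ∧ P 0 = p ∧
      Q m = q' ∧ P m = p' ∧ ∑ i ∈ Finset.range m, τ i = t ∧ ∑ i ∈ Finset.range m, σ i = s := by
  induction h with
  | refl h =>
    exact ⟨0, fun _ => q, fun _ => p, fun _ => 0, fun _ => 0,
      ⟨fun _ _ => h, fun i hi => absurd hi (Nat.not_lt_zero i)⟩, rfl, rfl, rfl, rfl, by simp,
      by simp⟩
  | @step q' p' q'' p'' t s τ₀ σ₀ _ hst hstep ih =>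
    obtain ⟨m, Q, P, τ, σ, hp, rfl, rfl, rfl, rfl, rfl, rfl⟩ := ih
    refine ⟨m + 1, Function.update Q (m + 1) q'', Function.update P (m + 1) p'',
      Function.update τ m τ₀, Function.update σ m σ₀, ⟨fun i hi => ?_, fun i hi => ?_⟩,
      by simp, by simp, by simp, by simp, ?_, ?_⟩
    · rcases Nat.lt_or_eq_of_le hi with hi | rfl
      · simpa [hi.ne] using hp.state i (Nat.le_of_lt_succ hi)
      · simpa using hst
    · rcases Nat.lt_or_eq_of_le (Nat.le_of_lt_succ hi) with hi' | rfl
      · have h1 : i ≠ m + 1 := hi.ne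
        have h2 : i + 1 ≠ m + 1 := by lia
        simpa [h1, h2, hi'.ne, Function.update_of_ne] using hp.step i hi'
      · simpa using hstep
    · rw [Finset.sum_range_succ, Function.update_self]
      congr 1
      exact Finset.sum_congr rfl fun i hi =>
        Function.update_of_ne (Finset.mem_range.1 hi).ne _ _
    · rw [Finset.sum_range_succ, Function.update_self]
      congr 1
      exact Finset.sum_congr rfl fun i hi =>
        Function.update_of_ne (Finset.mem_range.1 hi).ne _ _

theorem Reach.flowRel {n : ℕ} {A B : Set (Fin n → ℝ)} (h : HannerPair n A B)
    {q p q' p' : Fin n → ℝ} {t s : ℝ} (hr : Reach A B q p q' p' t s) :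
    FlowRel A B q p q' p' t s := by
  obtain ⟨m, Q, P, τ, σ, hp, rfl, rfl, rfl, rfl, rfl, rfl⟩ := hr.exists_path
  exact h.flowRel m Q P τ σ hp

/-- An infinite classical billiard orbit in `body A × body B`, together with the facet normals
`u i`, `w i` at its bounce points. -/
structure Orbit {n : ℕ} (A B : Set (Fin n → ℝ)) (q p u w : ℕ → Fin n → ℝ) (lam mu : ℕ → ℝ) :
    Prop where
  q_mem : ∀ i, q i ∈ body A
  p_mem : ∀ i, p i ∈ body B
  u_mem : ∀ i, u i ∈ A
  w_mem : ∀ i, w i ∈ B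
  uq : ∀ i, pairing (u i) (q i) = 1
  wp : ∀ i, pairing (w i) (p i) = 1
  uniq : ∀ i, ∀ v ∈ A, pairing v (q i) = 1 → v = u i
  unip : ∀ i, ∀ v ∈ B, pairing v (p i) = 1 → v = w i
  lam_pos : ∀ i, 0 < lam i
  mu_pos : ∀ i, 0 < mu i
  pos : ∀ i, 0 < pairing (u i) (w i)
  neg : ∀ i, pairing (u i) (w (i + 1)) < 0
  reflection : ∀ i, p (i + 1) = p i - lam i • u i
  motion : ∀ i, q (i + 1) = q i + mu i • w (i + 1)

namespace Orbit

variable {n : ℕ} {A B : Set (Fin n → ℝ)} {q p u w : ℕ → Fin n → ℝ} {lam mu : ℕ → ℝ}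

theorem shift (o : Orbit A B q p u w lam mu) (d : ℕ) :
    Orbit A B (fun i => q (d + i)) (fun i => p (d + i)) (fun i => u (d + i)) (fun i => w (d + i))
      (fun i => lam (d + i)) (fun i => mu (d + i)) where
  q_mem _ := o.q_mem _
  p_mem _ := o.p_mem _
  u_mem _ := o.u_mem _
  w_mem _ := o.w_mem _
  uq _ := o.uq _
  wp _ := o.wp _
  uniq _ := o.uniq _
  unip _ := o.unip _
  lam_pos _ := o.lam_pos _
  mu_pos _ := o.mu_pos _
  pos _ := o.pos _
  neg _ := o.neg _
  reflection _ := o.reflection _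
  motion _ := o.motion _

theorem isState (o : Orbit A B q p u w lam mu) (i j : ℕ) : IsState A B (q i) (p j) where
  memq := o.q_mem i
  memp := o.p_mem j
  uniq v hv v' hv' h h' := (o.uniq i v hv h).trans (o.uniq i v' hv' h').symm
  unip v hv v' hv' h h' := (o.unip j v hv h).trans (o.unip j v' hv' h').symm
  bdry := Or.inl ⟨u i, o.u_mem i, o.uq i⟩

/-- No normal is active at an interior point of a chord of the coordinate. -/
theorem not_active_q (o : Orbit A B q p u w lam mu) {j : ℕ} {c : ℝ} (h0 : 0 < c) (h1 : c < mu j)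
    {v : Fin n → ℝ} (hv : v ∈ A) : pairing v (q j + c • w (j + 1)) < 1 := by
  have e1 := o.q_mem j v hv
  have e2 := o.q_mem (j + 1) v hv
  rw [o.motion] at e2
  simp only [pairing_add_right, pairing_smul_right] at e2 ⊢
  rcases lt_or_eq_of_le e1 with e | e
  · rcases le_or_gt (pairing v (w (j + 1))) 0 with hs | hs <;> nlinarith
  · have := o.neg j
    rw [← o.uniq j v hv e] at this
    nlinarith

/-- No normal is active at an interior point of a chord of the momentum. -/
theorem not_active_p (o : Orbit A B q p u w lam mu) {j : ℕ} {c : ℝ} (h0 : 0 < c) (h1 : c < lam j)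
    {v : Fin n → ℝ} (hv : v ∈ B) : pairing v (p j - c • u j) < 1 := by
  have e1 := o.p_mem j v hv
  have e2 := o.p_mem (j + 1) v hv
  rw [o.reflection] at e2
  simp only [pairing_sub_right, pairing_smul_right] at e2 ⊢
  rcases lt_or_eq_of_le e1 with e | e
  · rcases le_or_gt (pairing v (u j)) 0 with hs | hs <;> nlinarith
  · have := o.pos j
    rw [← o.unip j v hv e, pairing_comm] at this
    nlinarith

theorem isStep_p (o : Orbit A B q p u w lam mu) (j : ℕ) {c : ℝ} (hc : 0 ≤ c) :
    IsStep A B (q j) (p j) (q j) (p j - c • u j) 0 c :=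
  Or.inl ⟨hc, rfl, rfl, u j, o.u_mem j, o.uq j, rfl⟩

theorem isStep_q (o : Orbit A B q p u w lam mu) (j : ℕ) {c : ℝ} (hc : 0 ≤ c) :
    IsStep A B (q j) (p (j + 1)) (q j + c • w (j + 1)) (p (j + 1)) c 0 :=
  Or.inr ⟨hc, rfl, rfl, w (j + 1), o.w_mem _, o.wp _, rfl⟩

theorem reach (o : Orbit A B q p u w lam mu) (j : ℕ) :
    Reach A B (q 0) (p 0) (q j) (p j) (∑ i ∈ Finset.range j, mu i)
      (∑ i ∈ Finset.range j, lam i) ∧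
    Reach A B (q 0) (p 0) (q j) (p (j + 1)) (∑ i ∈ Finset.range j, mu i)
      (∑ i ∈ Finset.range (j + 1), lam i) := by
  have key : ∀ j, Reach A B (q 0) (p 0) (q j) (p j) (∑ i ∈ Finset.range j, mu i)
      (∑ i ∈ Finset.range j, lam i) → Reach A B (q 0) (p 0) (q j) (p (j + 1))
      (∑ i ∈ Finset.range j, mu i) (∑ i ∈ Finset.range (j + 1), lam i) := fun j h => by
    have := h.step (o.isState j (j + 1)) (o.reflection j ▸ o.isStep_p j (o.lam_pos j).le)
    rwa [add_zero, ← Finset.sum_range_succ] at this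
  induction j with
  | zero =>
    have : Reach A B (q 0) (p 0) (q 0) (p 0) (∑ i ∈ Finset.range 0, mu i)
      (∑ i ∈ Finset.range 0, lam i) := by simpa using Reach.refl (o.isState 0 0)
    exact ⟨this, key 0 this⟩
  | succ j ih =>
    have := ih.2.step (o.isState (j + 1) (j + 1)) (o.motion j ▸ o.isStep_q j (o.mu_pos j).le)
    rw [add_zero, ← Finset.sum_range_succ] at this
    exact ⟨this, key _ this⟩

theorem exists_two_le_mu (o : Orbit A B q p u w lam mu) (h : HannerPair n A B) :
    ∃ j, 2 ≤ ∑ i ∈ Finset.range j, mu i := by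
  by_contra! hlt
  have : Finite A := h.dualPair.finA
  obtain ⟨i, j, hij, e⟩ := Finite.exists_ne_map_eq_of_infinite
    (fun i => (⟨u i, o.u_mem i⟩ : A))
  wlog hlt' : i < j generalizing i j
  · exact this j i hij.symm e.symm (by lia)
  obtain ⟨d, rfl⟩ := Nat.exists_eq_add_of_lt hlt'
  have e' : u i = u (i + d + 1) := congrArg Subtype.val e
  have hT := hlt (i + (d + 1))
  rw [Finset.sum_range_add] at hT
  have h0 : 0 ≤ ∑ k ∈ Finset.range i, mu k := Finset.sum_nonneg fun k _ => (o.mu_pos k).le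
  have h1 : 0 < ∑ k ∈ Finset.range (d + 1), mu (i + k) :=
    Finset.sum_pos (fun k _ => o.mu_pos _) (by simp)
  have := ((o.shift i).reach (d + 1)).1.flowRel h |>.q_geod (u i) (o.u_mem i) (o.uq i)
    (by linarith)
  rw [pairing_sub_right] at this
  have e1 := o.uq (i + d + 1)
  rw [← e'] at e1
  have e2 := o.uq i
  simp only [add_zero, ← add_assoc] at this
  linarith

theorem exists_two_le_lam (o : Orbit A B q p u w lam mu) (h : HannerPair n A B) :
    ∃ j, 2 ≤ ∑ i ∈ Finset.range j, lam i := by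
  by_contra! hlt
  have : Finite B := h.dualPair.finB
  obtain ⟨i, j, hij, e⟩ := Finite.exists_ne_map_eq_of_infinite
    (fun i => (⟨w i, o.w_mem i⟩ : B))
  wlog hlt' : i < j generalizing i j
  · exact this j i hij.symm e.symm (by lia)
  obtain ⟨d, rfl⟩ := Nat.exists_eq_add_of_lt hlt'
  have e' : w i = w (i + d + 1) := congrArg Subtype.val e
  have hT := hlt (i + (d + 1))
  rw [Finset.sum_range_add] at hT
  have h0 : 0 ≤ ∑ k ∈ Finset.range i, lam k := Finset.sum_nonneg fun k _ => (o.lam_pos k).le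
  have h1 : 0 < ∑ k ∈ Finset.range (d + 1), lam (i + k) :=
    Finset.sum_pos (fun k _ => o.lam_pos _) (by simp)
  have := ((o.shift i).reach (d + 1)).1.flowRel h |>.p_geod (w i) (o.w_mem i) (o.wp i)
    (by linarith)
  rw [pairing_sub_right] at this
  have e1 := o.wp (i + d + 1)
  rw [← e'] at e1
  have e2 := o.wp i
  simp only [add_zero, ← add_assoc] at this
  linarith

/-- The coordinate bounces exactly after half a period. -/
theorem exists_mu_eq_two (o : Orbit A B q p u w lam mu) (h : HannerPair n A B) :
    ∃ j, ∑ i ∈ Finset.range j, mu i < 2 ∧ ∑ i ∈ Finset.range (j + 1), mu i = 2 := by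
  classical
  have hex := o.exists_two_le_mu h
  obtain ⟨j, hj⟩ : ∃ j, Nat.find hex = j + 1 := Nat.exists_eq_succ_of_ne_zero fun h0 => by
    have := Nat.find_spec hex
    rw [h0] at this
    norm_num at this
  have h1 : ∑ i ∈ Finset.range j, mu i < 2 := not_le.1 (Nat.find_min hex (by lia))
  have h2 := Nat.find_spec hex
  rw [hj] at h2
  refine ⟨j, h1, le_antisymm ?_ h2⟩
  by_contra! hgt
  set c := 2 - ∑ i ∈ Finset.range j, mu i with hc
  rw [Finset.sum_range_succ] at hgt
  have hact : ∀ v ∈ A, pairing v (q j + c • w (j + 1)) < 1 := fun v hv =>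
    o.not_active_q (by linarith) (by linarith) hv
  have hr := (o.reach j).2.step (q'' := q j + c • w (j + 1)) (p'' := p (j + 1))
    ⟨fun v hv => (hact v hv).le, o.p_mem _, fun v hv _ _ e => absurd e (hact v hv).ne,
      (o.isState 0 (j + 1)).unip, Or.inr ⟨_, o.w_mem _, o.wp _⟩⟩ (o.isStep_q j (by linarith))
  have := (hr.flowRel h).q_neg (by linarith)
  have hlt := hact _ (h.dualPair.negA _ (o.u_mem 0))
  rw [this, pairing_neg_left, pairing_neg_right, o.uq] at hlt
  linarith

/-- The momentum bounces exactly after half a period. -/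
theorem exists_lam_eq_two (o : Orbit A B q p u w lam mu) (h : HannerPair n A B) :
    ∃ j, ∑ i ∈ Finset.range j, lam i < 2 ∧ ∑ i ∈ Finset.range (j + 1), lam i = 2 := by
  classical
  have hex := o.exists_two_le_lam h
  obtain ⟨j, hj⟩ : ∃ j, Nat.find hex = j + 1 := Nat.exists_eq_succ_of_ne_zero fun h0 => by
    have := Nat.find_spec hex
    rw [h0] at this
    norm_num at this
  have h1 : ∑ i ∈ Finset.range j, lam i < 2 := not_le.1 (Nat.find_min hex (by lia))
  have h2 := Nat.find_spec hex
  rw [hj] at h2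
  refine ⟨j, h1, le_antisymm ?_ h2⟩
  by_contra! hgt
  set c := 2 - ∑ i ∈ Finset.range j, lam i with hc
  rw [Finset.sum_range_succ] at hgt
  have hact : ∀ v ∈ B, pairing v (p j - c • u j) < 1 := fun v hv =>
    o.not_active_p (by linarith) (by linarith) hv
  have hr := (o.reach j).1.step (q'' := q j) (p'' := p j - c • u j)
    ⟨o.q_mem _, fun v hv => (hact v hv).le, (o.isState j 0).uniq,
      fun v hv _ _ e => absurd e (hact v hv).ne, Or.inl ⟨_, o.u_mem _, o.uq _⟩⟩
    (o.isStep_p j (by linarith))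
  have := (hr.flowRel h).p_neg (by linarith)
  have hlt := hact _ (h.dualPair.negB _ (o.w_mem 0))
  rw [this, pairing_neg_left, pairing_neg_right, o.wp] at hlt
  linarith

theorem sum_mu_strictMono (o : Orbit A B q p u w lam mu) :
    StrictMono fun j => ∑ i ∈ Finset.range j, mu i :=
  strictMono_nat_of_lt_succ fun j => by
    rw [Finset.sum_range_succ]; linarith [o.mu_pos j]

theorem sum_lam_strictMono (o : Orbit A B q p u w lam mu) :
    StrictMono fun j => ∑ i ∈ Finset.range j, lam i :=
  strictMono_nat_of_lt_succ fun j => by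
    rw [Finset.sum_range_succ]; linarith [o.lam_pos j]

/-- After half a period, the orbit is at the antipodal position. -/
theorem exists_antipodal (o : Orbit A B q p u w lam mu) (h : HannerPair n A B) :
    ∃ j, 0 < j ∧ ∑ i ∈ Finset.range j, mu i = 2 ∧ q j = -q 0 ∧ p j = -p 0 := by
  obtain ⟨j, hj, hj2⟩ := o.exists_mu_eq_two h
  obtain ⟨k, hk, hk2⟩ := o.exists_lam_eq_two h
  have hq : q (j + 1) = -q 0 := ((o.reach (j + 1)).1.flowRel h).q_neg hj2
  have hp : p (k + 1) = -p 0 := ((o.reach (k + 1)).1.flowRel h).p_neg hk2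
  have h1 := ((o.reach k).1.flowRel h).t_le hk
  have h2 := ((o.reach j).2.flowRel h).s_le hj
  rw [← hj2] at h1
  rw [← hk2] at h2
  have h1' : k ≤ j + 1 := o.sum_mu_strictMono.le_iff_le.1 h1
  have h2' : j + 1 ≤ k + 1 := o.sum_lam_strictMono.le_iff_le.1 h2
  refine ⟨j + 1, j.succ_pos, hj2, hq, ?_⟩
  rcases Nat.lt_or_eq_of_le h2' with hlt | heq
  · exfalso
    obtain rfl : k = j + 1 := by lia
    have hu : u (j + 1) = -u 0 := (o.uniq (j + 1) _ (h.dualPair.negA _ (o.u_mem 0))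
      (by rw [hq, pairing_neg_left, pairing_neg_right, neg_neg, o.uq])).symm
    have e := o.reflection (j + 1)
    rw [hp, hu] at e
    have e1 := congrArg (pairing (w 0)) e
    have e2 := h.dualPair.swap.neg_one_le (o.p_mem (j + 1)) (o.w_mem 0)
    simp only [pairing_neg_right, pairing_sub_right, pairing_smul_right, o.wp] at e1
    have e3 := o.pos 0
    rw [pairing_comm] at e3
    nlinarith [mul_pos (o.lam_pos (j + 1)) e3]
  · rw [heq, hp]

/-- Every orbit is closed, with coordinate time `4` per period, and no shorter period. -/
theorem exists_period (o : Orbit A B q p u w lam mu) (h : HannerPair n A B) :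
    ∃ m, 0 < m ∧ ∑ i ∈ Finset.range m, mu i = 4 ∧ q m = q 0 ∧ p m = p 0 ∧
      ∀ d, 0 < d → d < m → q d ≠ q 0 := by
  obtain ⟨j, hj, hj2, hq, hp⟩ := o.exists_antipodal h
  obtain ⟨k, hk, hk2, hq', hp'⟩ := (o.shift j).exists_antipodal h
  have hsum : ∑ i ∈ Finset.range (j + k), mu i = 4 := by
    rw [Finset.sum_range_add, hj2, hk2]; norm_num
  refine ⟨j + k, by lia, hsum, by rw [hq', add_zero, hq, neg_neg],
    by rw [hp', add_zero, hp, neg_neg], fun d hd hdm hqd => ?_⟩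
  rcases le_or_gt d j with hdj | hdj
  · have hle : ∑ i ∈ Finset.range d, mu i ≤ 2 := by
      rw [← hj2]; exact o.sum_mu_strictMono.monotone hdj
    have := ((o.reach d).1.flowRel h).q_geod _ (o.u_mem 0) (o.uq 0) hle
    rw [hqd, sub_self, pairing_zero_right] at this
    have hpos : ∑ i ∈ Finset.range 0, mu i < ∑ i ∈ Finset.range d, mu i := o.sum_mu_strictMono hd
    simp only [Finset.range_zero, Finset.sum_empty] at hpos
    linarith
  · obtain ⟨e, rfl⟩ := Nat.exists_eq_add_of_le hdj.le
    have hlt : ∑ i ∈ Finset.range e, mu (j + i) < ∑ i ∈ Finset.range k, mu (j + i) :=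
      (o.shift j).sum_mu_strictMono (by lia : e < k)
    rw [hk2] at hlt
    have := (((o.shift j).reach e).1.flowRel h).q_geod (-u 0) (h.dualPair.negA _ (o.u_mem 0))
      (by rw [add_zero, hq, pairing_neg_left, pairing_neg_right, neg_neg, o.uq]) hlt.le
    rw [add_zero, hq, hqd, pairing_neg_left, pairing_sub_right, pairing_neg_right, o.uq] at this
    linarith

end Orbit

section Boundary

variable {n : ℕ} {A B : Set (Fin n → ℝ)}

theorem isClosed_body (A : Set (Fin n → ℝ)) : IsClosed (body A) := by
  have : body A = ⋂ u ∈ A, {x | pairing u x ≤ 1} := by ext; simp [body]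
  rw [this]
  exact isClosed_biInter fun u _ => isClosed_le (continuous_pairing u) continuous_const

theorem pairing_lt_of_mem_interior {x u : Fin n → ℝ} (hx : x ∈ interior (body A)) (hu : u ∈ A) :
    pairing u x < 1 := by
  refine lt_of_le_of_ne (interior_subset hx u hu) fun e => ?_
  have hc : Filter.Tendsto (fun δ : ℝ => x + δ • x) (nhdsWithin 0 (Set.Ioi 0)) (nhds x) := by
    have : Continuous fun δ : ℝ => x + δ • x := by fun_prop
    simpa using (this.tendsto 0).mono_left nhdsWithin_le_nhds
  obtain ⟨δ, hδ, hpos⟩ :=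
    ((hc.eventually (mem_interior_iff_mem_nhds.1 hx)).and self_mem_nhdsWithin).exists
  have := hδ u hu
  rw [pairing_add_right, pairing_smul_right, e] at this
  have hpos : 0 < δ := hpos
  linarith

theorem mem_frontier_body (hA : A.Finite) {x : Fin n → ℝ} :
    x ∈ frontier (body A) ↔ x ∈ body A ∧ ∃ u ∈ A, pairing u x = 1 := by
  rw [(isClosed_body A).frontier_eq]
  refine ⟨fun h => ⟨h.1, ?_⟩, fun ⟨h, u, hu, e⟩ => ⟨h, fun hi =>
    (pairing_lt_of_mem_interior hi hu).ne e⟩⟩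
  by_contra! hne
  refine h.2 (mem_interior_iff_mem_nhds.2 ?_)
  have : ∀ᶠ y in nhds x, ∀ u ∈ A, pairing u y < 1 := (Filter.eventually_all_finite hA).2
    fun u hu => ((continuous_pairing u).tendsto x).eventually_lt_const
      (lt_of_le_of_ne (h.1 u hu) (hne u hu))
  filter_upwards [this] with y hy u hu using (hy u hu).le

/-- If only one normal `u` is active at `q`, small displacements orthogonal to `u` stay in the
body. -/
theorem exists_smul_mem_body (hA : A.Finite) {q u z : Fin n → ℝ} (hq : q ∈ body A)
    (huni : ∀ v ∈ A, pairing v q = 1 → v = u) (hz : pairing u z = 0) :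
    ∃ δ : ℝ, 0 < δ ∧ q + δ • z ∈ body A := by
  have : ∀ᶠ δ in nhdsWithin (0 : ℝ) (Set.Ioi 0), ∀ v ∈ A, pairing v (q + δ • z) ≤ 1 := by
    refine (Filter.eventually_all_finite hA).2 fun v hv => ?_
    rcases lt_or_eq_of_le (hq v hv) with hlt | e
    · have hc : Continuous fun δ : ℝ => pairing v (q + δ • z) := by
        have := continuous_pairing v
        fun_prop
      have h0 : pairing v (q + (0 : ℝ) • z) < 1 := by simpa using hlt
      exact (((hc.tendsto 0).mono_left nhdsWithin_le_nhds).eventually_lt_const h0).mono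
        fun _ h => h.le
    · refine Filter.Eventually.of_forall fun δ => ?_
      obtain rfl := huni v hv e
      simp [e, hz]
  obtain ⟨δ, hδ, hpos⟩ := (this.and self_mem_nhdsWithin).exists
  exact ⟨δ, hpos, hδ⟩

theorem DualPair.isUniqueNormal (h : DualPair A B) {q u : Fin n → ℝ} (hq : q ∈ body A)
    (hu : u ∈ A) (e : pairing u q = 1) (huni : ∀ v ∈ A, pairing v q = 1 → v = u) :
    IsUniqueNormal (body A) q u := by
  refine ⟨fun x hx => hx u hu, e, fun v hv hvq => ?_⟩
  have hle : ∀ z, pairing u z = 0 → pairing v z ≤ 0 := fun z hz => by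
    obtain ⟨δ, hδ, hmem⟩ := exists_smul_mem_body h.finA hq huni hz
    have := hv _ hmem
    rw [pairing_add_right, pairing_smul_right, hvq] at this
    nlinarith
  have huu : pairing u u ≠ 0 := fun h0 => h.ne_zero hu (eq_zero_of_pairing_self h0)
  set c := pairing u v / pairing u u with hc
  have hz : pairing u (v - c • u) = 0 := by
    rw [pairing_sub_right, pairing_smul_right, hc, div_mul_cancel₀ _ huu, sub_self]
  have h1 := hle _ hz
  have h2 := hle (-(v - c • u)) (by rw [pairing_neg_right, hz, neg_zero])
  rw [pairing_neg_right] at h2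
  have h3 : pairing (v - c • u) (v - c • u) = 0 := by
    rw [pairing_sub_right, pairing_smul_right, pairing_comm _ u, hz, pairing_comm _ v]
    linarith
  have hv' : v = c • u := sub_eq_zero.1 (eq_zero_of_pairing_self h3)
  have hc1 : c = 1 := by
    rw [hv', pairing_comm, pairing_smul_right, pairing_comm, e, mul_one] at hvq
    exact hvq
  rw [hv', hc1, one_smul]

theorem suppFn_smul {T : Set (Fin n → ℝ)} {p w : Fin n → ℝ} {c : ℝ} (hp : p ∈ T)
    (hT : ∀ x ∈ T, pairing w x ≤ 1) (e : pairing w p = 1) (hc : 0 ≤ c) :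
    suppFn T (c • w) = c := by
  refine IsGreatest.csSup_eq ⟨⟨p, hp, ?_⟩, ?_⟩
  · change pairing p (c • w) = c
    rw [pairing_smul_right, pairing_comm, e, mul_one]
  · rintro _ ⟨x, hx, rfl⟩
    change pairing x (c • w) ≤ c
    rw [pairing_smul_right, pairing_comm]
    exact mul_le_of_le_one_right hc (hT x hx)

end Boundary

theorem apply_succ_mod {α : Type*} {f : ℕ → α} {m : ℕ} (hm : 0 < m) (hf : f m = f 0) (i : ℕ) :
    f ((i + 1) % m) = f (i % m + 1) := by
  rw [← Nat.mod_add_mod]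
  rcases Nat.lt_or_eq_of_le (Nat.succ_le_of_lt (Nat.mod_lt i hm)) with h | h
  · rw [Nat.mod_eq_of_lt h]
  · rw [← Nat.succ_eq_add_one, h, Nat.mod_self, hf]

/-- Every infinite orbit gives rise to a closed simple classical trajectory of length `4`. -/
theorem Orbit.exists_classicalTraj {n : ℕ} {A B : Set (Fin n → ℝ)} {q p u w : ℕ → Fin n → ℝ}
    {lam mu : ℕ → ℝ} (o : Orbit A B q p u w lam mu) (h : HannerPair n A B) :
    ∃ τ : ClassicalTraj n (body A) (body B),
      τ.IsSimple ∧ τ.length = 4 ∧ τ.q 0 = q 0 ∧ τ.p 0 = p 0 := by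
  obtain ⟨m, hm, hsum, hqm, hpm, hmin⟩ := o.exists_period h
  have hd := h.dualPair
  have hwm : w m = w 0 := o.unip 0 _ (o.w_mem m) (by rw [← hpm, o.wp])
  have hmot : ∀ i, q ((i + 1) % m) - q (i % m) = mu (i % m) • w ((i + 1) % m) := fun i => by
    rw [apply_succ_mod hm hqm, apply_succ_mod hm hwm, o.motion, add_sub_cancel_left]
  let τ : ClassicalTraj n (body A) (body B) :=
    { m := m
      m_pos := hm
      q := fun i => q (i % m)
      p := fun i => p (i % m)
      nq := fun i => u (i % m)
      np := fun i => w (i % m)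
      lam := fun i => lam (i % m)
      mu := fun i => mu (i % m)
      q_mem := fun i => (mem_frontier_body hd.finA).2 ⟨o.q_mem _, _, o.u_mem _, o.uq _⟩
      p_mem := fun i => (mem_frontier_body hd.finB).2 ⟨o.p_mem _, _, o.w_mem _, o.wp _⟩
      q_periodic := fun i => by rw [Nat.add_mod_right]
      p_periodic := fun i => by rw [Nat.add_mod_right]
      nq_spec := fun i => hd.isUniqueNormal (o.q_mem _) (o.u_mem _) (o.uq _) (o.uniq _)
      np_spec := fun i => hd.swap.isUniqueNormal (o.p_mem _) (o.w_mem _) (o.wp _) (o.unip _)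
      lam_pos := fun i => o.lam_pos _
      mu_pos := fun i => o.mu_pos _
      reflection := fun i => by
        rw [apply_succ_mod hm hpm, o.reflection, sub_sub_cancel_left, neg_smul]
      motion := hmot }
  refine ⟨τ, fun d hd0 hdm hper => hmin d hd0 hdm ?_, ?_, ?_, ?_⟩
  · have := (hper 0).1
    change q ((0 + d) % m) = q (0 % m) at this
    rwa [zero_add, Nat.mod_eq_of_lt hdm, Nat.zero_mod] at this
  · rw [← hsum]
    refine Finset.sum_congr rfl fun i hi => ?_
    change suppFn (body B) (q ((i + 1) % m) - q (i % m)) = mu i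
    rw [hmot, Nat.mod_eq_of_lt (Finset.mem_range.1 hi)]
    exact suppFn_smul (o.p_mem _) (fun x hx => hx _ (o.w_mem _)) (o.wp _) (o.mu_pos _).le
  · exact congrArg q (Nat.zero_mod m)
  · exact congrArg p (Nat.zero_mod m)

section Null

variable {E : Type*} [NormedAddCommGroup E] [NormedSpace ℝ E] [FiniteDimensional ℝ E]
  [MeasurableSpace E] [BorelSpace E]

/-- The intersection of three independent affine hyperplanes has codimension `3`. -/
theorem hausdorffMeasure_inter_eq_zero {d : ℝ} (hd : Module.finrank ℝ E < d + 3)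
    (f g k : E →ₗ[ℝ] ℝ) (a b c : ℝ) {x y z : E} (hx : f x ≠ 0) (hy : f y = 0) (hy' : g y ≠ 0)
    (hz : f z = 0) (hz' : g z = 0) (hz'' : k z ≠ 0) :
    μH[d] {v : E | f v = a ∧ g v = b ∧ k v = c} = 0 := by
  have h1 : f.ker < ⊤ := lt_top_iff_ne_top.2 fun h => hx (LinearMap.mem_ker.1 (h ▸ trivial))
  have h2 : f.ker ⊓ g.ker < f.ker :=
    lt_of_le_of_ne inf_le_left fun h => hy' (h.ge (LinearMap.mem_ker.2 hy)).2
  have h3 : f.ker ⊓ g.ker ⊓ k.ker < f.ker ⊓ g.ker :=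
    lt_of_le_of_ne inf_le_left fun h =>
      hz'' (h.ge ⟨LinearMap.mem_ker.2 hz, LinearMap.mem_ker.2 hz'⟩).2
  set K := f.ker ⊓ g.ker ⊓ k.ker with hK
  have hr : Module.finrank ℝ K + 3 ≤ Module.finrank ℝ E := by
    have := Submodule.finrank_lt_finrank_of_lt h1
    have := Submodule.finrank_lt_finrank_of_lt h2
    have := Submodule.finrank_lt_finrank_of_lt h3
    rw [finrank_top] at *
    lia
  have hr' : (Module.finrank ℝ K : ℝ) + 3 ≤ Module.finrank ℝ E := by exact_mod_cast hr
  rcases Set.eq_empty_or_nonempty {v : E | f v = a ∧ g v = b ∧ k v = c} with h0 | ⟨v₀, hv₀⟩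
  · rw [h0, measure_empty]
  have hsub : {v : E | f v = a ∧ g v = b ∧ k v = c} ⊆
      (fun v : K => v₀ + (v : E)) '' Set.univ := by
    rintro v ⟨e1, e2, e3⟩
    obtain ⟨e1', e2', e3'⟩ := hv₀
    exact ⟨⟨v - v₀, ⟨⟨by simp [e1, e1'], by simp [e2, e2']⟩, by simp [e3, e3']⟩⟩, trivial, by simp⟩
  have hiso : Isometry fun v : K => v₀ + (v : E) :=
    (IsometryEquiv.addLeft v₀).isometry.comp isometry_subtype_coe
  refine measure_mono_null hsub ?_
  have hd0 : 0 ≤ d := by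
    have : (0 : ℝ) ≤ Module.finrank ℝ K := Nat.cast_nonneg _
    linarith
  lift d to NNReal using hd0
  refine hausdorffMeasure_of_dimH_lt ?_
  rw [hiso.dimH_image, Real.dimH_univ_eq_finrank]
  have : (Module.finrank ℝ K : ℝ) < d := by linarith
  exact_mod_cast this

theorem hausdorffMeasure_image_eq_zero {d : ℝ} (hd : 0 ≤ d) (L : E →ₗ[ℝ] E) {f : E → E}
    (hf : ∀ x y, f x - f y = L (x - y)) {s : Set E} (hs : μH[d] s = 0) : μH[d] (f '' s) = 0 := by
  have hlip : LipschitzWith ‖L.toContinuousLinearMap‖₊ f :=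
    LipschitzWith.of_dist_le_mul fun x y => by
      rw [dist_eq_norm, dist_eq_norm, hf]
      exact L.toContinuousLinearMap.le_opNorm (x - y)
  simpa [hs] using hlip.hausdorffMeasure_image_le hd s

/-- A null set can be enlarged to a null set invariant under countably many maps preserving null
sets. -/
theorem exists_invariant_null {X : Type*} [MeasurableSpace X] {μ : Measure X} {F : Set (X → X)}
    (hF : F.Countable) (hf : ∀ f ∈ F, ∀ s, μ s = 0 → μ (f '' s) = 0) {S : Set X} (hS : μ S = 0) :
    ∃ N, S ⊆ N ∧ μ N = 0 ∧ ∀ f ∈ F, ∀ x ∈ N, f x ∈ N := by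
  let T : ℕ → Set X := fun k => Nat.rec S (fun _ s => ⋃ f ∈ F, f '' s) k
  refine ⟨⋃ k, T k, Set.subset_iUnion T 0, measure_iUnion_null fun k => ?_, fun f hfF x hx => ?_⟩
  · induction k with
    | zero => exact hS
    | succ k ih => exact (measure_biUnion_null_iff hF).2 fun f hfF => hf f hfF _ ih
  · obtain ⟨k, hk⟩ := Set.mem_iUnion.1 hx
    exact Set.mem_iUnion.2 ⟨k + 1, Set.mem_biUnion hfF ⟨x, hk, rfl⟩⟩

end Null

section Generic

variable {n : ℕ} {A B : Set (Fin n → ℝ)}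

/-- The functional `⟨u, ·⟩` as a linear map. -/
noncomputable def pairingₗ (u : Fin n → ℝ) : (Fin n → ℝ) →ₗ[ℝ] ℝ where
  toFun := pairing u
  map_add' := pairing_add_right u
  map_smul' c := pairing_smul_right c u

/-- Positions on the product of the boundaries at which one of the facets is not unique. -/
def singularSet (A B : Set (Fin n → ℝ)) : Set ((Fin n → ℝ) × (Fin n → ℝ)) :=
  {x | ∃ u ∈ A, ∃ w ∈ B, pairing u x.1 = 1 ∧ pairing w x.2 = 1 ∧
    ((∃ v ∈ A, v ≠ u ∧ pairing v x.1 = 1) ∨ ∃ v ∈ B, v ≠ w ∧ pairing v x.2 = 1)}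

theorem exists_separating {u v q : Fin n → ℝ} (huv : v ≠ u) (hu : pairing u q = 1)
    (hv : pairing v q = 1) : ∃ z, pairing u z = 0 ∧ pairing v z ≠ 0 := by
  refine ⟨(v - u) - pairing u (v - u) • q, by simp [hu], fun h => huv ?_⟩
  refine sub_eq_zero.1 (eq_zero_of_pairing_self ?_)
  rw [pairing_sub_right, pairing_smul_right, hv, mul_one] at h
  rw [pairing_sub_right (v - u), pairing_comm _ v, pairing_comm _ u]
  exact h

theorem pairing_self_ne_zero {u q : Fin n → ℝ} (h : pairing u q = 1) : pairing u u ≠ 0 :=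
  fun h0 => by simp [eq_zero_of_pairing_self h0] at h

theorem hausdorffMeasure_singularSet (hA : A.Finite) (hB : B.Finite) :
    μH[(2 * n - 2 : ℝ)] (singularSet A B) = 0 := by
  have hdim : (Module.finrank ℝ ((Fin n → ℝ) × (Fin n → ℝ)) : ℝ) < 2 * n - 2 + 3 := by
    rw [Module.finrank_prod, Module.finrank_fin_fun]
    push_cast
    linarith
  let fstₗ (u : Fin n → ℝ) : (Fin n → ℝ) × (Fin n → ℝ) →ₗ[ℝ] ℝ :=
    pairingₗ u ∘ₗ LinearMap.fst ℝ _ _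
  let sndₗ (u : Fin n → ℝ) : (Fin n → ℝ) × (Fin n → ℝ) →ₗ[ℝ] ℝ :=
    pairingₗ u ∘ₗ LinearMap.snd ℝ _ _
  have h1 : ∀ u ∈ A, ∀ v ∈ A, ∀ w ∈ B, μH[(2 * n - 2 : ℝ)]
      {x : (Fin n → ℝ) × (Fin n → ℝ) |
        v ≠ u ∧ fstₗ u x = 1 ∧ fstₗ v x = 1 ∧ sndₗ w x = 1} = 0 := fun u _ v _ w _ => by
    rcases Set.eq_empty_or_nonempty {x : (Fin n → ℝ) × (Fin n → ℝ) |
        v ≠ u ∧ fstₗ u x = 1 ∧ fstₗ v x = 1 ∧ sndₗ w x = 1} with h0 | ⟨x, hne, hu, hv, hw⟩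
    · rw [h0, measure_empty]
    obtain ⟨z, hz, hz'⟩ := exists_separating hne hu hv
    refine measure_mono_null (fun x hx => hx.2) (hausdorffMeasure_inter_eq_zero hdim
      (fstₗ u) (fstₗ v) (sndₗ w) 1 1 1 (x := (u, 0)) (y := (z, 0)) (z := (0, w))
      (pairing_self_ne_zero hu) hz hz' (pairing_zero_right u) (pairing_zero_right v)
      (pairing_self_ne_zero hw))
  have h2 : ∀ u ∈ A, ∀ v ∈ B, ∀ w ∈ B, μH[(2 * n - 2 : ℝ)]
      {x : (Fin n → ℝ) × (Fin n → ℝ) |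
        v ≠ w ∧ sndₗ w x = 1 ∧ sndₗ v x = 1 ∧ fstₗ u x = 1} = 0 := fun u _ v _ w _ => by
    rcases Set.eq_empty_or_nonempty {x : (Fin n → ℝ) × (Fin n → ℝ) |
        v ≠ w ∧ sndₗ w x = 1 ∧ sndₗ v x = 1 ∧ fstₗ u x = 1} with h0 | ⟨x, hne, hw, hv, hu⟩
    · rw [h0, measure_empty]
    obtain ⟨z, hz, hz'⟩ := exists_separating hne hw hv
    refine measure_mono_null (fun x hx => hx.2) (hausdorffMeasure_inter_eq_zero hdim
      (sndₗ w) (sndₗ v) (fstₗ u) 1 1 1 (x := (0, w)) (y := (0, z)) (z := (u, 0))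
      (pairing_self_ne_zero hw) hz hz' (pairing_zero_right w) (pairing_zero_right v)
      (pairing_self_ne_zero hu))
  refine measure_mono_null (t := (⋃ u ∈ A, ⋃ v ∈ A, ⋃ w ∈ B,
      {x | v ≠ u ∧ fstₗ u x = 1 ∧ fstₗ v x = 1 ∧ sndₗ w x = 1}) ∪ ⋃ u ∈ A, ⋃ v ∈ B, ⋃ w ∈ B,
      {x | v ≠ w ∧ sndₗ w x = 1 ∧ sndₗ v x = 1 ∧ fstₗ u x = 1}) ?_ ?_
  · rintro x ⟨u, hu, w, hw, hux, hwx, ⟨v, hv, hne, hvx⟩ | ⟨v, hv, hne, hvx⟩⟩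
    · refine Or.inl ?_
      simp only [Set.mem_iUnion]
      exact ⟨u, hu, v, hv, w, hw, hne, hux, hvx, hwx⟩
    · refine Or.inr ?_
      simp only [Set.mem_iUnion]
      exact ⟨u, hu, v, hv, w, hw, hne, hwx, hvx, hux⟩
  · refine measure_union_null ?_ ?_
    · exact (measure_biUnion_null_iff hA.countable).2 fun u hu =>
        (measure_biUnion_null_iff hA.countable).2 fun v hv =>
          (measure_biUnion_null_iff hB.countable).2 fun w hw => h1 u hu v hv w hw
    · exact (measure_biUnion_null_iff hA.countable).2 fun u hu =>
        (measure_biUnion_null_iff hB.countable).2 fun v hv =>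
          (measure_biUnion_null_iff hB.countable).2 fun w hw => h2 u hu v hv w hw

/-- Move the momentum back along `u` to the hyperplane `⟨w, ·⟩ = 1`. -/
noncomputable def backMomentum (u w : Fin n → ℝ) (x : (Fin n → ℝ) × (Fin n → ℝ)) :
    (Fin n → ℝ) × (Fin n → ℝ) :=
  (x.1, x.2 - ((pairing w x.2 - 1) / pairing u w) • u)

/-- Move the coordinate back along `w` to the hyperplane `⟨u, ·⟩ = 1`. -/
noncomputable def backCoordinate (u w : Fin n → ℝ) (x : (Fin n → ℝ) × (Fin n → ℝ)) :
    (Fin n → ℝ) × (Fin n → ℝ) :=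
  (x.1 - ((pairing u x.1 - 1) / pairing u w) • w, x.2)

theorem backMomentum_sub_smul {u w q p : Fin n → ℝ} (c : ℝ) (hw : pairing w p = 1)
    (huw : pairing u w ≠ 0) : backMomentum u w (q, p - c • u) = (q, p) := by
  have : (pairing w (p - c • u) - 1) / pairing u w = -c := by
    rw [pairing_sub_right, pairing_smul_right, hw, pairing_comm w u]
    field_simp
    ring
  simp only [backMomentum, this, neg_smul, sub_neg_eq_add, sub_add_cancel]

theorem backCoordinate_add_smul {u w q p : Fin n → ℝ} (c : ℝ) (hu : pairing u q = 1)
    (huw : pairing u w ≠ 0) : backCoordinate u w (q + c • w, p) = (q, p) := by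
  have : (pairing u (q + c • w) - 1) / pairing u w = c := by
    rw [pairing_add_right, pairing_smul_right, hu]
    field_simp
    ring
  simp only [backCoordinate, this, add_sub_cancel_right]

theorem hausdorffMeasure_image_backMomentum {d : ℝ} (hd : 0 ≤ d) (u w : Fin n → ℝ)
    {s : Set ((Fin n → ℝ) × (Fin n → ℝ))} (hs : μH[d] s = 0) :
    μH[d] (backMomentum u w '' s) = 0 := by
  refine hausdorffMeasure_image_eq_zero hd ((LinearMap.fst ℝ _ _).prod (LinearMap.snd ℝ _ _ -
    ((pairing u w)⁻¹ • pairingₗ w ∘ₗ LinearMap.snd ℝ _ _).smulRight u)) (fun x y => ?_) hs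
  refine Prod.ext rfl ?_
  change x.2 - ((pairing w x.2 - 1) / pairing u w) • u -
    (y.2 - ((pairing w y.2 - 1) / pairing u w) • u) =
      x.2 - y.2 - ((pairing u w)⁻¹ * pairing w (x.2 - y.2)) • u
  rw [pairing_sub_right]
  module

theorem hausdorffMeasure_image_backCoordinate {d : ℝ} (hd : 0 ≤ d) (u w : Fin n → ℝ)
    {s : Set ((Fin n → ℝ) × (Fin n → ℝ))} (hs : μH[d] s = 0) :
    μH[d] (backCoordinate u w '' s) = 0 := by
  refine hausdorffMeasure_image_eq_zero hd ((LinearMap.fst ℝ _ _ -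
    ((pairing u w)⁻¹ • pairingₗ u ∘ₗ LinearMap.fst ℝ _ _).smulRight w).prod
      (LinearMap.snd ℝ _ _)) (fun x y => ?_) hs
  refine Prod.ext ?_ rfl
  change x.1 - ((pairing u x.1 - 1) / pairing u w) • w -
    (y.1 - ((pairing u y.1 - 1) / pairing u w) • w) =
      x.1 - y.1 - ((pairing u w)⁻¹ * pairing u (x.1 - y.1)) • w
  rw [pairing_sub_right]
  module

/-- There is a null set containing the singular positions and invariant under backward moves. -/
theorem exists_exceptionalSet (hn : 1 ≤ n) (hA : A.Finite) (hB : B.Finite) :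
    ∃ N : Set ((Fin n → ℝ) × (Fin n → ℝ)), singularSet A B ⊆ N ∧ μH[(2 * n - 2 : ℝ)] N = 0 ∧
      ∀ u ∈ A, ∀ w ∈ B, ∀ x ∈ N, backMomentum u w x ∈ N ∧ backCoordinate u w x ∈ N := by
  have hd : (0 : ℝ) ≤ 2 * n - 2 := by
    have : (1 : ℝ) ≤ n := by exact_mod_cast hn
    linarith
  obtain ⟨N, hS, hN, hinv⟩ := exists_invariant_null
    (F := Set.image2 backMomentum A B ∪ Set.image2 backCoordinate A B)
    ((hA.image2 _ hB).union (hA.image2 _ hB)).countable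
    (by
      rintro _ (⟨u, -, w, -, rfl⟩ | ⟨u, -, w, -, rfl⟩) s hs
      · exact hausdorffMeasure_image_backMomentum hd u w hs
      · exact hausdorffMeasure_image_backCoordinate hd u w hs)
    (hausdorffMeasure_singularSet hA hB)
  exact ⟨N, hS, hN, fun u hu w hw x hx => ⟨hinv _ (Or.inl ⟨u, hu, w, hw, rfl⟩) x hx,
    hinv _ (Or.inr ⟨u, hu, w, hw, rfl⟩) x hx⟩⟩

/-- A ray entering the body leaves it through some facet. -/
theorem exists_exit (hA : A.Finite) {x d : Fin n → ℝ} (hx : x ∈ body A)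
    (hd : ∃ u ∈ A, 0 < pairing u d) (hact : ∀ v ∈ A, pairing v x = 1 → pairing v d ≤ 0) :
    ∃ c : ℝ, 0 < c ∧ x + c • d ∈ body A ∧
      ∃ v ∈ A, pairing v (x + c • d) = 1 ∧ 0 < pairing v d := by
  obtain ⟨v, ⟨hv, hvd⟩, hmin⟩ := Set.exists_min_image {v | v ∈ A ∧ 0 < pairing v d}
    (fun v => (1 - pairing v x) / pairing v d) (hA.subset fun v hv => hv.1) hd
  have hlt : pairing v x < 1 := lt_of_le_of_ne (hx v hv) fun e => hvd.not_ge (hact v hv e)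
  have hc : 0 < (1 - pairing v x) / pairing v d := div_pos (by linarith) hvd
  refine ⟨_, hc, fun y hy => ?_, v, hv, ?_, hvd⟩
  · rw [pairing_add_right, pairing_smul_right]
    rcases le_or_gt (pairing y d) 0 with h0 | h0
    · nlinarith [hx y hy]
    · have := (le_div_iff₀ h0).1 (hmin y ⟨hy, h0⟩)
      linarith
  · rw [pairing_add_right, pairing_smul_right, div_mul_cancel₀ _ hvd.ne']
    ring

/-- A nonexceptional position, with its normals, from which the momentum can move inwards. -/
structure IsGood (A B : Set (Fin n → ℝ)) (N : Set ((Fin n → ℝ) × (Fin n → ℝ)))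
    (q p u w : Fin n → ℝ) : Prop where
  q_mem : q ∈ body A
  p_mem : p ∈ body B
  u_mem : u ∈ A
  w_mem : w ∈ B
  uq : pairing u q = 1
  wp : pairing w p = 1
  pos : 0 < pairing u w
  notMem : (q, p) ∉ N

theorem uniq_of_notMem_singularSet {q p u w : Fin n → ℝ} (h : (q, p) ∉ singularSet A B)
    (hu : u ∈ A) (hw : w ∈ B) (huq : pairing u q = 1) (hwp : pairing w p = 1) :
    (∀ v ∈ A, pairing v q = 1 → v = u) ∧ ∀ v ∈ B, pairing v p = 1 → v = w :=
  ⟨fun v hv e => by_contra fun hne => h ⟨u, hu, w, hw, huq, hwp, Or.inl ⟨v, hv, hne, e⟩⟩,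
    fun v hv e => by_contra fun hne => h ⟨u, hu, w, hw, huq, hwp, Or.inr ⟨v, hv, hne, e⟩⟩⟩

theorem IsGood.exists_next (hd : DualPair A B) {N : Set ((Fin n → ℝ) × (Fin n → ℝ))}
    (hS : singularSet A B ⊆ N) (hN : ∀ u ∈ A, ∀ w ∈ B, ∀ x ∈ N,
      backMomentum u w x ∈ N ∧ backCoordinate u w x ∈ N)
    {q p u w : Fin n → ℝ} (h : IsGood A B N q p u w) :
    ∃ (q' p' u' w' : Fin n → ℝ) (lam mu : ℝ), IsGood A B N q' p' u' w' ∧ 0 < lam ∧ 0 < mu ∧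
      pairing u w' < 0 ∧ p' = p - lam • u ∧ q' = q + mu • w' := by
  have huni := uniq_of_notMem_singularSet (fun hs => h.notMem (hS hs)) h.u_mem h.w_mem h.uq h.wp
  obtain ⟨lam, hlam, hp', w', hw', hwp', hpos⟩ := exists_exit hd.finB (d := -u) h.p_mem
    (by
      obtain ⟨w₀, hw₀, e⟩ := hd.exB _ (hd.negA u h.u_mem)
      exact ⟨w₀, hw₀, by rw [pairing_comm, e]; exact one_pos⟩)
    (fun v hv e => by
      rw [huni.2 v hv e, pairing_neg_right, pairing_comm]
      exact (neg_neg_of_pos h.pos).le)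
  rw [smul_neg, ← sub_eq_add_neg] at hp' hwp'
  rw [pairing_neg_right, pairing_comm] at hpos
  have hneg : pairing u w' < 0 := by linarith
  have hN' : (q, p - lam • u) ∉ N := fun hmem => h.notMem <| by
    have := (hN u h.u_mem w h.w_mem _ hmem).1
    rwa [backMomentum_sub_smul lam h.wp h.pos.ne'] at this
  obtain ⟨mu, hmu, hq', u', hu', huq', hpos'⟩ := exists_exit hd.finA (d := w') h.q_mem
    (by
      obtain ⟨u₀, hu₀, e⟩ := hd.exA w' hw'
      exact ⟨u₀, hu₀, by rw [pairing_comm, e]; exact one_pos⟩)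
    (fun v hv e => by rw [huni.1 v hv e]; exact hneg.le)
  refine ⟨_, _, u', w', lam, mu, ⟨hq', hp', hu', hw', huq', hwp', hpos', fun hmem => hN' ?_⟩,
    hlam, hmu, hneg, rfl, rfl⟩
  have := (hN u h.u_mem w' hw' _ hmem).2
  rwa [backCoordinate_add_smul mu h.uq hneg.ne] at this

theorem IsGood.exists_orbit (hd : DualPair A B) {N : Set ((Fin n → ℝ) × (Fin n → ℝ))}
    (hS : singularSet A B ⊆ N) (hN : ∀ u ∈ A, ∀ w ∈ B, ∀ x ∈ N,
      backMomentum u w x ∈ N ∧ backCoordinate u w x ∈ N)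
    {q₀ p₀ u₀ w₀ : Fin n → ℝ} (h₀ : IsGood A B N q₀ p₀ u₀ w₀) :
    ∃ (q p u w : ℕ → Fin n → ℝ) (lam mu : ℕ → ℝ), Orbit A B q p u w lam mu ∧ q 0 = q₀ ∧
      p 0 = p₀ := by
  choose! q' p' u' w' lam mu hgood hlam hmu hneg hp hq using
    fun (q p u w : Fin n → ℝ) (h : IsGood A B N q p u w) => h.exists_next hd hS hN
  let next (x : (Fin n → ℝ) × (Fin n → ℝ) × (Fin n → ℝ) × (Fin n → ℝ)) :=
    (q' x.1 x.2.1 x.2.2.1 x.2.2.2, p' x.1 x.2.1 x.2.2.1 x.2.2.2, u' x.1 x.2.1 x.2.2.1 x.2.2.2,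
      w' x.1 x.2.1 x.2.2.1 x.2.2.2)
  let X (i : ℕ) := next^[i] (q₀, p₀, u₀, w₀)
  have hX : ∀ i, X (i + 1) = next (X i) := fun i => Function.iterate_succ_apply' _ _ _
  have hg : ∀ i, IsGood A B N (X i).1 (X i).2.1 (X i).2.2.1 (X i).2.2.2 := fun i => by
    induction i with
    | zero => exact h₀
    | succ i ih => rw [hX]; exact hgood _ _ _ _ ih
  have huni i := uniq_of_notMem_singularSet (fun hs => (hg i).notMem (hS hs)) (hg i).u_mem
    (hg i).w_mem (hg i).uq (hg i).wp
  refine ⟨fun i => (X i).1, fun i => (X i).2.1, fun i => (X i).2.2.1, fun i => (X i).2.2.2,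
    fun i => lam (X i).1 (X i).2.1 (X i).2.2.1 (X i).2.2.2,
    fun i => mu (X i).1 (X i).2.1 (X i).2.2.1 (X i).2.2.2,
    { q_mem := fun i => (hg i).q_mem
      p_mem := fun i => (hg i).p_mem
      u_mem := fun i => (hg i).u_mem
      w_mem := fun i => (hg i).w_mem
      uq := fun i => (hg i).uq
      wp := fun i => (hg i).wp
      uniq := fun i => (huni i).1
      unip := fun i => (huni i).2
      lam_pos := fun i => hlam _ _ _ _ (hg i)
      mu_pos := fun i => hmu _ _ _ _ (hg i)
      pos := fun i => (hg i).pos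
      neg := fun i => by rw [hX]; exact hneg _ _ _ _ (hg i)
      reflection := fun i => by rw [hX]; exact hp _ _ _ _ (hg i)
      motion := fun i => by rw [hX]; exact hq _ _ _ _ (hg i) }, rfl, rfl⟩

end Generic

theorem HannerPair.one_le {n : ℕ} {A B : Set (Fin n → ℝ)} (h : HannerPair n A B) : 1 ≤ n := by
  induction h with
  | seg => exact le_rfl
  | prod _ _ h _ => exact h.trans (Nat.le_add_right _ _)
  | swap _ h => exact h

end Billiard

open Billiard in
/-- In a Hanner polytope `H`, among all initial positions `(q₁, p₁) ∈ ∂H × ∂H°` such that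
`−n_H(q₁)` placed at `p₁` points into the interior of `H°`, all but a lower-dimensional
(`(2n−2)`-Hausdorff-null) set generate a closed simple classical billiard trajectory of
length 4 in the configuration `H × H°`. -/
theorem hanner_generic_initial_position (n : ℕ) (H : Set (Fin n → ℝ))
    (hH : IsHanner n H) :
    ∃ N : Set ((Fin n → ℝ) × (Fin n → ℝ)),
      μH[(2 * n - 2 : ℝ)] N = 0 ∧
      ∀ q₁ p₁ : Fin n → ℝ, q₁ ∈ frontier H → p₁ ∈ frontier (polarSet H) →
        (∃ u, IsUniqueNormal H q₁ u ∧
          ∃ ε : ℝ, 0 < ε ∧ p₁ - ε • u ∈ interior (polarSet H)) →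
        (q₁, p₁) ∉ N →
        ∃ τ : ClassicalTraj n H (polarSet H),
          τ.IsSimple ∧ τ.length = 4 ∧ τ.q 0 = q₁ ∧ τ.p 0 = p₁ := by
  obtain ⟨A, B, hAB, rfl⟩ := hH.exists_pair
  have hd := hAB.dualPair
  obtain ⟨N, hS, hN, hinv⟩ := exists_exceptionalSet hAB.one_le hd.finA hd.finB
  refine ⟨N, hN, fun q₁ p₁ hq hp ⟨u, hu, ε, hε, hinterior⟩ hnot => ?_⟩
  rw [hd.polarSet_body] at hp hinterior ⊢
  obtain ⟨hqA, v, hv, hvq⟩ := (mem_frontier_body hd.finA).1 hq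
  obtain ⟨hpB, w, hw, hwp⟩ := (mem_frontier_body hd.finB).1 hp
  obtain rfl : v = u := hu.2.2 v (fun x hx => hx v hv) hvq
  have hlt := pairing_lt_of_mem_interior hinterior hw
  rw [pairing_sub_right, pairing_smul_right, hwp, pairing_comm] at hlt
  have hpos : 0 < pairing v w := pos_of_mul_pos_right (by linarith) hε.le
  obtain ⟨q, p, u, w, lam, mu, o, rfl, rfl⟩ :=
    IsGood.exists_orbit hd hS hinv ⟨hqA, hpB, hv, hw, hvq, hwp, hpos, hnot⟩
  exact o.exists_classicalTraj hAB
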